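/- arXiv:2007.07826 — 3 statements merged into one kernel-verified Lean document; each statement's English description precedes it below -/
import Mathlib

section
/- (Spectral resolution lemma) Let (C^{•,•}, d) be a bi-indexed differential complex whose differential preserves the filtration induced by the first index, and let (E^{•,•,•}, ∂) together with ι be a spectral resolution of (C^{•,•}, d). Then, for every k ≥ 1 and all integers a, b, the map induced by ι is an isomorphism ᴵC_k^{a,b} ≅ ᴵE_k^{a,b} between the k-th pages of the spectral sequences induced by the filtrations by the first index, and these isomorphisms are compatible with the differentials of the pages. -/
namespace S11

variable {K : Type} [Field K]

section TripleComplex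

variable {V : Type} [AddCommGroup V] [Module K V]

/-- `Tot^n(E) = ⨁_{a+b+c = n} E^{a,b,c}`. -/
def TotE (X : ℤ → ℤ → ℤ → Submodule K V) (n : ℤ) : Submodule K V :=
  ⨆ (a : ℤ) (b : ℤ) (c : ℤ) (_ : a + b + c = n), X a b c

/-- `E^{≥a} = ⨁_{a' ≥ a, b, c} E^{a',b,c}`. -/
def GeE (X : ℤ → ℤ → ℤ → Submodule K V) (a : ℤ) : Submodule K V :=
  ⨆ (a' : ℤ) (_ : a ≤ a') (b : ℤ) (c : ℤ), X a' b c

/-- The projection onto the graded piece `E^{p}` of the decomposition. -/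
noncomputable def projE (X : ℤ → ℤ → ℤ → Submodule K V)
    [DirectSum.Decomposition (fun p : ℤ × ℤ × ℤ => X p.1 p.2.1 p.2.2)]
    (p : ℤ × ℤ × ℤ) (x : V) : V :=
  (DirectSum.decompose (fun p : ℤ × ℤ × ℤ => X p.1 p.2.1 p.2.2) x p : V)

/-- The numerator `Z` of the `k`-th page in position `(a,b)`:
`{x ∈ Tot^{a+b}(E) ∩ E^{≥a} : ∂x ∈ E^{≥a+k}}`. -/
def ZE (X : ℤ → ℤ → ℤ → Submodule K V) (dE : V →ₗ[K] V) (a b : ℤ) (k : ℕ) :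
    Submodule K V :=
  (TotE X (a + b) ⊓ GeE X a) ⊓ Submodule.comap dE (GeE X (a + k))

/-- The denominator of the `k`-th page in position `(a,b)`:
`Z ∩ (E^{≥a+1} + ∂E^{≥a-k+1})`. -/
def DenE (X : ℤ → ℤ → ℤ → Submodule K V) (dE : V →ₗ[K] V) (a b : ℤ) (k : ℕ) :
    Submodule K V :=
  ZE X dE a b k ⊓ (GeE X (a + 1) ⊔ Submodule.map dE (GeE X (a - k + 1)))

end TripleComplex

section BiComplex

variable {U : Type} [AddCommGroup U] [Module K U]

/-- `Tot^n(C) = ⨁_{a+b = n} C^{a,b}`. -/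
def TotC (Y : ℤ → ℤ → Submodule K U) (n : ℤ) : Submodule K U :=
  ⨆ (a : ℤ) (b : ℤ) (_ : a + b = n), Y a b

/-- `C^{≥a} = ⨁_{a' ≥ a, b} C^{a',b}`. -/
def GeC (Y : ℤ → ℤ → Submodule K U) (a : ℤ) : Submodule K U :=
  ⨆ (a' : ℤ) (_ : a ≤ a') (b : ℤ), Y a' b

/-- The numerator `Z` of the `k`-th page of `C` in position `(a,b)`. -/
def ZC (Y : ℤ → ℤ → Submodule K U) (dC : U →ₗ[K] U) (a b : ℤ) (k : ℕ) :
    Submodule K U :=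
  (TotC Y (a + b) ⊓ GeC Y a) ⊓ Submodule.comap dC (GeC Y (a + k))

/-- The denominator of the `k`-th page of `C` in position `(a,b)`. -/
def DenC (Y : ℤ → ℤ → Submodule K U) (dC : U →ₗ[K] U) (a b : ℤ) (k : ℕ) :
    Submodule K U :=
  ZC Y dC a b k ⊓ (GeC Y (a + 1) ⊔ Submodule.map dC (GeC Y (a - k + 1)))

end BiComplex

end S11

/-!
Filter everything by the first index. Modulo `firstFiltration X (p + 1)`, an element of first index
at least `p` is a sum over the column `a = p`, where the leading component of `∂` is `∂₃` in the
direction of the third index. Exactness of `∂₃` removes the top third degree of a cycle by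
subtracting a boundary, and in third degree `0` identifies it with an element of `C`. So the
cokernel of `ι` has acyclic graded pieces. Iterating `k` times, an element of filtration `p` whose
boundary has filtration `p + k` modulo the image of `ι` is, up to a boundary, the sum of an element
of `C` and an element of filtration `p + k`, which is what both injectivity and surjectivity on the
`k`-th page need. Total degrees enter only at the end, by projecting onto one of them.
-/

namespace S11

section GradedModule

variable {R V W I J : Type*} [Semiring R] [AddCommMonoid V] [Module R V]
  [AddCommMonoid W] [Module R W]

/-- The sum of the graded pieces of `M` with index in `S`. -/
def supportedIn (M : I → Submodule R V) (S : Set I) : Submodule R V :=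
  ⨆ i ∈ S, M i

theorem le_supportedIn (M : I → Submodule R V) {S : Set I} {i : I} (hi : i ∈ S) :
    M i ≤ supportedIn M S :=
  le_biSup M hi

theorem supportedIn_mono (M : I → Submodule R V) {S T : Set I} (h : S ⊆ T) :
    supportedIn M S ≤ supportedIn M T :=
  biSup_mono h

theorem map_mem_of_mem_supportedIn {M : I → Submodule R V} {S : Set I} {P : Submodule R W}
    (f : V →ₗ[R] W) (hf : ∀ i ∈ S, ∀ x ∈ M i, f x ∈ P) {x : V} (hx : x ∈ supportedIn M S) :
    f x ∈ P := by
  suffices supportedIn M S ≤ P.comap f from this hx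
  exact iSup₂_le hf

variable [DecidableEq I] [DecidableEq J] (M : I → Submodule R V) (N : J → Submodule R W)
  [DirectSum.Decomposition M] [DirectSum.Decomposition N]

open Classical in
/-- The projection of a graded module onto `supportedIn M S` that kills the remaining pieces.
For `S = {i}` it is the `i`-th component, viewed in the whole module. -/
noncomputable def projOn (S : Set I) : V →ₗ[R] V :=
  DirectSum.toModule R I V (fun i => if i ∈ S then (M i).subtype else 0) ∘ₗ
    (DirectSum.decomposeLinearEquiv M).toLinearMap

variable {M N} {S T : Set I} {i : I} {x : V}

theorem projOn_of_mem_piece (hx : x ∈ M i) (hi : i ∈ S) : projOn M S x = x := by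
  lift x to M i using hx
  simp [projOn, hi]

theorem projOn_of_mem_piece_of_notMem (hx : x ∈ M i) (hi : i ∉ S) : projOn M S x = 0 := by
  lift x to M i using hx
  simp [projOn, hi]

theorem projOn_mem_inter (hx : x ∈ supportedIn M T) : projOn M S x ∈ supportedIn M (S ∩ T) := by
  refine map_mem_of_mem_supportedIn _ (fun i hiT y hy => ?_) hx
  by_cases hiS : i ∈ S
  · rw [projOn_of_mem_piece hy hiS]
    exact le_supportedIn M (Set.mem_inter hiS hiT) hy
  · rw [projOn_of_mem_piece_of_notMem hy hiS]
    exact zero_mem _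

theorem projOn_eq_zero_of_disjoint (hST : Disjoint S T) (hx : x ∈ supportedIn M T) :
    projOn M S x = 0 := by
  simpa [hST.inter_eq, supportedIn] using projOn_mem_inter (S := S) hx

theorem projOn_eq_self (hx : x ∈ supportedIn M S) : projOn M S x = x := by
  suffices supportedIn M S ≤ LinearMap.eqLocus (projOn M S) LinearMap.id from this hx
  exact iSup₂_le fun i hi y hy => projOn_of_mem_piece hy hi

theorem projOn_mem (S : Set I) (x : V) : projOn M S x ∈ supportedIn M S := by
  induction x using DirectSum.Decomposition.inductionOn M with
  | zero => simp
  | add x y hx hy => exact map_add (projOn M S) x y ▸ add_mem hx hy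
  | @homogeneous i x =>
    exact supportedIn_mono M Set.inter_subset_left (projOn_mem_inter (le_supportedIn M rfl x.2))

theorem projOn_singleton_mem (i : I) (x : V) : projOn M {i} x ∈ M i := by
  simpa [supportedIn] using projOn_mem (M := M) {i} x

theorem eq_of_eqOn_pieces {f g : V →ₗ[R] W} (h : ∀ i, ∀ x ∈ M i, f x = g x) (x : V) :
    f x = g x :=
  LinearMap.congr_fun
    (DirectSum.decompose_lhom_ext M fun i => LinearMap.ext fun y => h i y y.2) x

theorem projOn_add_projOn_compl (S : Set I) (x : V) : projOn M S x + projOn M Sᶜ x = x := by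
  refine eq_of_eqOn_pieces (M := M) (f := projOn M S + projOn M Sᶜ) (g := LinearMap.id)
    (fun i y hy => ?_) x
  by_cases hi : i ∈ S
  · simp [projOn_of_mem_piece hy hi, projOn_of_mem_piece_of_notMem hy (Set.notMem_compl_iff.2 hi)]
  · simp [projOn_of_mem_piece_of_notMem hy hi, projOn_of_mem_piece hy (Set.mem_compl hi)]

theorem projOn_singleton_eq_decompose (i : I) (x : V) :
    projOn M {i} x = DirectSum.decompose M x i := by
  induction x using DirectSum.Decomposition.inductionOn M with
  | zero => simp
  | add x y hx hy => simp [hx, hy]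
  | @homogeneous j x =>
    obtain rfl | hij := eq_or_ne i j
    · rw [projOn_of_mem_piece x.2 (Set.mem_singleton i), DirectSum.decompose_of_mem_same M x.2]
    · rw [projOn_of_mem_piece_of_notMem x.2 (Set.notMem_singleton_iff.2 hij.symm),
        DirectSum.decompose_of_mem_ne M x.2 hij.symm]

theorem mem_of_projOn_singleton_mem {P : Submodule R V} (h : ∀ i, projOn M {i} x ∈ P) :
    x ∈ P := by
  classical
  rw [← DirectSum.sum_support_decompose M x]
  exact sum_mem fun i _ => projOn_singleton_eq_decompose (M := M) i x ▸ h i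

theorem projOn_map {f : V →ₗ[R] W} {S' : Set J}
    (hmem : ∀ i ∈ S, ∀ x ∈ M i, f x ∈ supportedIn N S')
    (hcompl : ∀ i ∉ S, ∀ x ∈ M i, f x ∈ supportedIn N S'ᶜ) (x : V) :
    projOn N S' (f x) = f (projOn M S x) := by
  refine eq_of_eqOn_pieces (M := M) (f := projOn N S' ∘ₗ f) (g := f ∘ₗ projOn M S)
    (fun i y hy => ?_) x
  rw [LinearMap.comp_apply, LinearMap.comp_apply]
  by_cases hi : i ∈ S
  · rw [projOn_of_mem_piece hy hi, projOn_eq_self (hmem i hi y hy)]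
  · rw [projOn_of_mem_piece_of_notMem hy hi, map_zero,
      projOn_eq_zero_of_disjoint disjoint_compl_right (hcompl i hi y hy)]

end GradedModule

section FilteredComplex

variable {R U V : Type*} [Ring R] [AddCommGroup U] [Module R U] [AddCommGroup V] [Module R V]

/-- The cycles `{x ∈ T^{a+b} ∩ F^a : d x ∈ F^{a+k}}` on the `k`-th page, in position `(a, b)`, of
the spectral sequence of a complex with total degree pieces `T` and descending filtration `F`. -/
def pageCycles (T F : ℤ → Submodule R V) (d : V →ₗ[R] V) (a b : ℤ) (k : ℕ) : Submodule R V :=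
  (T (a + b) ⊓ F a) ⊓ (F (a + k)).comap d

/-- The submodule of `pageCycles` whose quotient is the `k`-th page in position `(a, b)`. -/
def pageBoundaries (T F : ℤ → Submodule R V) (d : V →ₗ[R] V) (a b : ℤ) (k : ℕ) :
    Submodule R V :=
  pageCycles T F d a b k ⊓ (F (a + 1) ⊔ (F (a - k + 1)).map d)

/-- A strict chain map `ι` of filtered complexes whose cokernel has acyclic associated graded
complex. Acyclicity is stated inside the target: an element of `FV p` which is a cycle modulo
`FV (p + 1)` and the image of `ι` is a boundary modulo the same submodules. -/
structure IsFilteredResolution (FU : ℤ → Submodule R U) (FV : ℤ → Submodule R V)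
    (dU : U →ₗ[R] U) (dV : V →ₗ[R] V) (ι : U →ₗ[R] V) : Prop where
  antitone : Antitone FV
  d_mem : ∀ p, ∀ x ∈ FV p, dV x ∈ FV p
  d_d : ∀ x, dV (dV x) = 0
  comm : ∀ u, ι (dU u) = dV (ι u)
  map_mem_iff : ∀ p u, ι u ∈ FV p ↔ u ∈ FU p
  acyclic : ∀ p, ∀ y ∈ FV p, dV y ∈ FV (p + 1) ⊔ LinearMap.range ι →
    y ∈ FV (p + 1) ⊔ (FU p).map ι ⊔ (FV p).map dV

namespace IsFilteredResolution

variable {FU : ℤ → Submodule R U} {FV : ℤ → Submodule R V} {dU : U →ₗ[R] U} {dV : V →ₗ[R] V}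
  {ι : U →ₗ[R] V}

theorem antitone_source (h : IsFilteredResolution FU FV dU dV ι) : Antitone FU :=
  fun p q hpq u hu => (h.map_mem_iff p u).1 (h.antitone hpq ((h.map_mem_iff q u).2 hu))

theorem exists_eq_add_add (h : IsFilteredResolution FU FV dU dV ι) (m : ℕ) :
    ∀ {p : ℤ} {y : V}, y ∈ FV p → dV y ∈ FV (p + m) ⊔ LinearMap.range ι →
      ∃ w ∈ FV (p + m), ∃ x ∈ FU p, ∃ z ∈ FV p, y = w + ι x + dV z := by
  induction m with
  | zero => exact fun {p y} hy _ => ⟨y, by simpa using hy, 0, zero_mem _, 0, zero_mem _, by simp⟩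
  | succ m ih =>
    intro p y hy hdy
    have hp : p + (m + 1 : ℕ) = p + 1 + m := by push_cast; ring
    rw [hp] at hdy ⊢
    have hdy' : dV y ∈ FV (p + 1) ⊔ LinearMap.range ι :=
      sup_le_sup_right (h.antitone (by lia)) _ hdy
    obtain ⟨_, hv, _, ⟨z, hz, rfl⟩, rfl⟩ := Submodule.mem_sup.1 (h.acyclic p y hy hdy')
    obtain ⟨w, hw, _, ⟨x, hx, rfl⟩, rfl⟩ := Submodule.mem_sup.1 hv
    have hdw : dV w ∈ FV (p + 1 + m) ⊔ LinearMap.range ι := by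
      have hιx : dV (ι x) ∈ FV (p + 1 + m) ⊔ LinearMap.range ι :=
        Submodule.mem_sup_right ⟨dU x, h.comm x⟩
      simpa [h.d_d] using sub_mem hdy hιx
    obtain ⟨w', hw', x', hx', z', hz', rfl⟩ := ih hw hdw
    have hpp : p ≤ p + 1 := by lia
    refine ⟨w', hw', x + x', add_mem hx (h.antitone_source hpp hx'), z + z',
      add_mem hz (h.antitone hpp hz'), ?_⟩
    simp only [map_add]
    abel

theorem map_mem_sup_iff (h : IsFilteredResolution FU FV dU dV ι) (a : ℤ) (k : ℕ) (x : U) :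
    ι x ∈ FV (a + 1) ⊔ (FV (a - k + 1)).map dV ↔
      x ∈ FU (a + 1) ⊔ (FU (a - k + 1)).map dU := by
  constructor
  · intro hx
    obtain ⟨w, hw, _, ⟨z, hz, rfl⟩, hwz⟩ := Submodule.mem_sup.1 hx
    have ha : a - k + 1 + k = a + 1 := by ring
    have hdz : dV z ∈ FV (a - k + 1 + k) ⊔ LinearMap.range ι := by
      rw [ha, eq_sub_of_add_eq' hwz]
      exact sub_mem (Submodule.mem_sup_right ⟨x, rfl⟩) (Submodule.mem_sup_left hw)
    obtain ⟨w', hw', x', hx', z', -, rfl⟩ := h.exists_eq_add_add k hz hdz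
    rw [ha] at hw'
    have hsub : x - dU x' ∈ FU (a + 1) := by
      rw [← h.map_mem_iff, map_sub, ← hwz, h.comm]
      simpa [h.d_d, ← add_assoc] using add_mem hw (h.d_mem _ w' hw')
    exact Submodule.mem_sup.2 ⟨_, hsub, _, ⟨x', hx', rfl⟩, sub_add_cancel _ _⟩
  · intro hx
    obtain ⟨w, hw, _, ⟨z, hz, rfl⟩, rfl⟩ := Submodule.mem_sup.1 hx
    rw [map_add, h.comm]
    exact add_mem (Submodule.mem_sup_left ((h.map_mem_iff _ w).2 hw))
      (Submodule.mem_sup_right ⟨ι z, (h.map_mem_iff _ z).2 hz, rfl⟩)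

theorem exists_sub_mem_sup (h : IsFilteredResolution FU FV dU dV ι) {a : ℤ} {k : ℕ} (hk : 1 ≤ k)
    {y : V} (hy : y ∈ FV a) (hdy : dV y ∈ FV (a + k)) :
    ∃ x ∈ FU a, dU x ∈ FU (a + k) ∧ y - ι x ∈ FV (a + 1) ⊔ (FV (a - k + 1)).map dV := by
  obtain ⟨w, hw, x, hx, z, hz, rfl⟩ := h.exists_eq_add_add k hy (Submodule.mem_sup_left hdy)
  refine ⟨x, hx, ?_, ?_⟩
  · rw [← h.map_mem_iff, h.comm]
    simpa [h.d_d] using sub_mem hdy (h.d_mem _ w hw)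
  · rw [add_right_comm, add_sub_cancel_right]
    exact add_mem (Submodule.mem_sup_left (h.antitone (by lia) hw))
      (Submodule.mem_sup_right ⟨z, h.antitone (by lia) hz, rfl⟩)

end IsFilteredResolution

end FilteredComplex

section SpectralResolution

variable {R U V J : Type*} [Ring R] [AddCommGroup U] [Module R U] [AddCommGroup V] [Module R V]

/-- The descending filtration of a multigraded module by the first index. -/
def firstFiltration (M : ℤ × J → Submodule R V) (p : ℤ) : Submodule R V :=
  supportedIn M {i | p ≤ i.1}

/-- The total degree `n` part of a bigraded module. -/
def biTotal (Y : ℤ × ℤ → Submodule R U) (n : ℤ) : Submodule R U :=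
  supportedIn Y {i | i.1 + i.2 = n}

/-- The total degree `n` part of a trigraded module. -/
def triTotal (X : ℤ × ℤ × ℤ → Submodule R V) (n : ℤ) : Submodule R V :=
  supportedIn X {i | i.1 + i.2.1 + i.2.2 = n}

theorem firstFiltration_antitone (M : ℤ × J → Submodule R V) : Antitone (firstFiltration M) :=
  fun _ _ hpq => supportedIn_mono M fun _ hi => hpq.trans hi

theorem projOn_mem_firstFiltration [DecidableEq J] {M : ℤ × J → Submodule R V}
    [DirectSum.Decomposition M] (S : Set (ℤ × J)) {p : ℤ} {x : V} (hx : x ∈ firstFiltration M p) :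
    projOn M S x ∈ firstFiltration M p :=
  supportedIn_mono M Set.inter_subset_right (projOn_mem_inter hx)

/-- Interpolates between `firstFiltration X (p + 1)` and `firstFiltration X p`: the pieces with
first index `p` are admitted only if their third index is less than `m`. -/
def columnTruncation (X : ℤ × ℤ × ℤ → Submodule R V) (p m : ℤ) : Submodule R V :=
  supportedIn X {i | p ≤ i.1 ∧ (i.1 = p → i.2.2 < m)}

/-- A resolution `ι` of the complex `(Y, dU)` by the trigraded complex `(X, dV)`, which is exact
for the component `∂₃` of `dV` of tridegree `(0, 0, 1)`. Exactness is recorded as the inclusion of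
kernels in images, and `X` is only required to vanish in negative third degrees. -/
structure IsSpectralResolution (Y : ℤ × ℤ → Submodule R U) (dU : U →ₗ[R] U)
    (X : ℤ × ℤ × ℤ → Submodule R V) [DirectSum.Decomposition X] (dV : V →ₗ[R] V)
    (ι : U →ₗ[R] V) : Prop where
  eq_bot_of_neg : ∀ a b c : ℤ, c < 0 → X (a, b, c) = ⊥
  d_mem : ∀ i, ∀ x ∈ X i, dV x ∈ supportedIn X
    {j | i.1 ≤ j.1 ∧ j.2.2 ≤ i.2.2 + 1 ∧ j.1 + j.2.1 + j.2.2 = i.1 + i.2.1 + i.2.2 + 1}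
  d_d : ∀ x, dV (dV x) = 0
  map_mem : ∀ a b : ℤ, ∀ u ∈ Y (a, b), ι u ∈ X (a, b, 0)
  injOn : ∀ a b : ℤ, ∀ u ∈ Y (a, b), ι u = 0 → u = 0
  comm : ∀ u, ι (dU u) = dV (ι u)
  exact_zero : ∀ a b : ℤ, ∀ x ∈ X (a, b, 0), projOn X {(a, b, 1)} (dV x) = 0 →
    ∃ u ∈ Y (a, b), ι u = x
  exact_succ : ∀ a b c : ℤ, 0 ≤ c → ∀ x ∈ X (a, b, c + 1),
    projOn X {(a, b, c + 2)} (dV x) = 0 →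
      ∃ y ∈ X (a, b, c), projOn X {(a, b, c + 1)} (dV y) = x

theorem exists_mem_columnTruncation {X : ℤ × ℤ × ℤ → Submodule R V} {p : ℤ} {y : V}
    (hy : y ∈ firstFiltration X p) : ∃ m : ℕ, y ∈ columnTruncation X p m := by
  have hmono : Monotone fun m : ℕ => columnTruncation X p m := fun m n hmn =>
    supportedIn_mono X fun i hi => ⟨hi.1, fun h => (hi.2 h).trans_le (by exact_mod_cast hmn)⟩
  rw [← Submodule.mem_iSup_of_directed _ hmono.directed_le]
  refine map_mem_of_mem_supportedIn LinearMap.id (fun i hi x hx => ?_) hy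
  refine Submodule.mem_iSup_of_mem (i.2.2.toNat + 1) (le_supportedIn X ?_ hx)
  exact ⟨hi, fun _ => by lia⟩

theorem mem_of_mem_columnTruncation {X : ℤ × ℤ × ℤ → Submodule R V} [DirectSum.Decomposition X]
    {P : Submodule R V} {p m : ℤ} {y : V} (hy : y ∈ columnTruncation X p (m + 1))
    (hP : columnTruncation X p m ≤ P) (htop : ∀ b, projOn X {(p, b, m)} y ∈ P) : y ∈ P := by
  refine mem_of_projOn_singleton_mem (M := X) fun i => ?_
  by_cases hi : i.1 = p ∧ i.2.2 = m
  · obtain ⟨a, b, c⟩ := i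
    obtain ⟨rfl, rfl⟩ := hi
    exact htop b
  · refine hP (supportedIn_mono X ?_ (projOn_mem_inter hy))
    rintro _ ⟨rfl, hp, hm⟩
    exact ⟨hp, fun h => by have := hm h; lia⟩

namespace IsSpectralResolution

variable {Y : ℤ × ℤ → Submodule R U} {X : ℤ × ℤ × ℤ → Submodule R V} [DirectSum.Decomposition X]
  {dU : U →ₗ[R] U} {dV : V →ₗ[R] V} {ι : U →ₗ[R] V}

theorem d_mem_firstFiltration (h : IsSpectralResolution Y dU X dV ι) {p : ℤ} {x : V}
    (hx : x ∈ firstFiltration X p) : dV x ∈ firstFiltration X p := by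
  refine map_mem_of_mem_supportedIn dV (fun i hi y hy => ?_) hx
  refine supportedIn_mono X (fun j hj => ?_) (h.d_mem i y hy)
  exact Int.le_trans (show p ≤ i.1 from hi) (show i.1 ≤ j.1 from hj.1)

theorem columnTruncation_zero_le (h : IsSpectralResolution Y dU X dV ι) (p : ℤ) :
    columnTruncation X p 0 ≤ firstFiltration X (p + 1) := by
  refine iSup₂_le fun ⟨a, b, c⟩ ⟨hp, hc⟩ => ?_
  obtain hlt | rfl := hp.lt_or_eq
  · exact le_supportedIn X (Int.add_one_le_iff.2 hlt)
  · exact h.eq_bot_of_neg p b c (hc rfl) ▸ bot_le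

theorem projOn_triTotal_d (h : IsSpectralResolution Y dU X dV ι) (n : ℤ) (x : V) :
    projOn X {i | i.1 + i.2.1 + i.2.2 = n + 1} (dV x) =
      dV (projOn X {i | i.1 + i.2.1 + i.2.2 = n} x) :=
  projOn_map (fun i hi y hy => supportedIn_mono X (fun j hj => by grind) (h.d_mem i y hy))
    (fun i hi y hy => supportedIn_mono X (fun j hj => by grind) (h.d_mem i y hy)) x

theorem projOn_triTotal_mem_sup (h : IsSpectralResolution Y dU X dV ι) {p q : ℤ} (n : ℤ) {y : V}
    (hy : y ∈ firstFiltration X p ⊔ (firstFiltration X q).map dV) :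
    projOn X {i | i.1 + i.2.1 + i.2.2 = n} y ∈
      firstFiltration X p ⊔ (firstFiltration X q).map dV := by
  obtain ⟨w, hw, _, ⟨z, hz, rfl⟩, rfl⟩ := Submodule.mem_sup.1 hy
  have hdz := h.projOn_triTotal_d (n - 1) z
  rw [sub_add_cancel] at hdz
  rw [map_add, hdz]
  exact add_mem (Submodule.mem_sup_left (projOn_mem_firstFiltration _ hw))
    (Submodule.mem_sup_right ⟨_, projOn_mem_firstFiltration _ hz, rfl⟩)

variable [DirectSum.Decomposition Y]

theorem projOn_map_ι (h : IsSpectralResolution Y dU X dV ι) (S : Set (ℤ × ℤ × ℤ)) (u : U) :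
    projOn X S (ι u) = ι (projOn Y {i | (i.1, i.2, 0) ∈ S} u) :=
  projOn_map (M := Y) (fun i hi v hv => le_supportedIn X hi (h.map_mem i.1 i.2 v hv))
    (fun i hi v hv => le_supportedIn X (Set.mem_compl hi) (h.map_mem i.1 i.2 v hv)) u

theorem injective (h : IsSpectralResolution Y dU X dV ι) : Function.Injective ι := by
  refine (injective_iff_map_eq_zero ι).2 fun u hu => ?_
  suffices u ∈ (⊥ : Submodule R U) from this
  refine mem_of_projOn_singleton_mem (M := Y) fun ⟨a, b⟩ => ?_
  refine h.injOn a b _ (projOn_singleton_mem _ u) ?_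
  have hset : {i : ℤ × ℤ | (i.1, i.2, (0 : ℤ)) ∈ ({(a, b, 0)} : Set (ℤ × ℤ × ℤ))} = {(a, b)} := by
    ext ⟨a', b'⟩
    simp
  rw [← hset, ← h.projOn_map_ι, hu, map_zero]

theorem map_mem_supportedIn_iff (h : IsSpectralResolution Y dU X dV ι) (S : Set (ℤ × ℤ × ℤ))
    (u : U) : ι u ∈ supportedIn X S ↔ u ∈ supportedIn Y {i | (i.1, i.2, 0) ∈ S} := by
  constructor
  · intro hu
    have hproj := projOn_eq_self hu
    rw [h.projOn_map_ι] at hproj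
    exact h.injective hproj ▸ projOn_mem _ u
  · exact map_mem_of_mem_supportedIn (M := Y) ι fun i hi v hv =>
      le_supportedIn X hi (h.map_mem i.1 i.2 v hv)

theorem map_mem_supportedIn_third_zero (h : IsSpectralResolution Y dU X dV ι) (u : U) :
    ι u ∈ supportedIn X {i | i.2.2 = 0} := by
  have hu : u ∈ supportedIn Y Set.univ :=
    mem_of_projOn_singleton_mem fun i =>
      le_supportedIn Y (Set.mem_univ i) (projOn_singleton_mem i u)
  exact map_mem_of_mem_supportedIn ι
    (fun i _ v hv => le_supportedIn X (by simp) (h.map_mem i.1 i.2 v hv)) hu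

theorem map_mem_firstFiltration_iff (h : IsSpectralResolution Y dU X dV ι) (p : ℤ) (u : U) :
    ι u ∈ firstFiltration X p ↔ u ∈ firstFiltration Y p :=
  h.map_mem_supportedIn_iff {i | p ≤ i.1} u

theorem map_mem_triTotal_iff (h : IsSpectralResolution Y dU X dV ι) (n : ℤ) (u : U) :
    ι u ∈ triTotal X n ↔ u ∈ biTotal Y n := by
  simpa [triTotal, biTotal] using h.map_mem_supportedIn_iff {i | i.1 + i.2.1 + i.2.2 = n} u

theorem projOn_d_projOn_top_eq_zero (h : IsSpectralResolution Y dU X dV ι) {p m : ℤ} (hm : 0 ≤ m)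
    {y : V} (hy : y ∈ columnTruncation X p (m + 1))
    (hdy : dV y ∈ firstFiltration X (p + 1) ⊔ LinearMap.range ι) (b : ℤ) :
    projOn X {(p, b, m + 1)} (dV (projOn X {(p, b, m)} y)) = 0 := by
  have hdy_top : projOn X {(p, b, m + 1)} (dV y) = 0 := by
    obtain ⟨w, hw, _, ⟨u, rfl⟩, hsum⟩ := Submodule.mem_sup.1 hdy
    rw [← hsum, map_add, projOn_eq_zero_of_disjoint (by simp) hw,
      projOn_eq_zero_of_disjoint (by simp; lia) (h.map_mem_supportedIn_third_zero u), add_zero]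
  have hrest : projOn X {(p, b, m + 1)} (dV (projOn X {(p, b, m)}ᶜ y)) = 0 := by
    refine projOn_eq_zero_of_disjoint disjoint_compl_right
      (map_mem_of_mem_supportedIn dV (fun i hi x hx => ?_) (projOn_mem_inter hy))
    obtain ⟨a, b', c⟩ := i
    refine supportedIn_mono X ?_ (h.d_mem _ x hx)
    rintro _ ⟨ha, hc, hdeg⟩ rfl
    simp only [Set.mem_inter_iff, Set.mem_compl_iff, Set.mem_singleton_iff, Set.mem_ofPred_eq,
      Prod.mk.injEq] at hi ha hc hdeg
    lia
  rw [← projOn_add_projOn_compl (M := X) {(p, b, m)} y, map_add, map_add, hrest, add_zero]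
    at hdy_top
  exact hdy_top

theorem mem_sup_map_ι_of_mem_columnTruncation_one (h : IsSpectralResolution Y dU X dV ι)
    {p : ℤ} {y : V} (hy : y ∈ columnTruncation X p 1)
    (hdy : dV y ∈ firstFiltration X (p + 1) ⊔ LinearMap.range ι) :
    y ∈ firstFiltration X (p + 1) ⊔ (firstFiltration Y p).map ι := by
  refine mem_of_mem_columnTruncation (m := 0) hy
    ((h.columnTruncation_zero_le p).trans le_sup_left) fun b => Submodule.mem_sup_right ?_
  obtain ⟨u, hu, huy⟩ := h.exact_zero p b _ (projOn_singleton_mem _ y)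
    (h.projOn_d_projOn_top_eq_zero le_rfl hy hdy b)
  exact ⟨u, le_supportedIn Y (le_refl p) hu, huy⟩

theorem mem_sup_map_d_of_mem_columnTruncation_add_two (h : IsSpectralResolution Y dU X dV ι)
    {p m : ℤ} (hm : 0 ≤ m) {y : V} (hy : y ∈ columnTruncation X p (m + 2))
    (hdy : dV y ∈ firstFiltration X (p + 1) ⊔ LinearMap.range ι) :
    y ∈ columnTruncation X p (m + 1) ⊔ (firstFiltration X p).map dV := by
  have hm2 : m + 2 = m + 1 + 1 := by ring
  refine mem_of_mem_columnTruncation (hm2 ▸ hy) le_sup_left fun b => ?_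
  obtain ⟨z, hz, hzy⟩ := h.exact_succ p b m hm _ (projOn_singleton_mem _ y)
    (hm2 ▸ h.projOn_d_projOn_top_eq_zero (by lia) (hm2 ▸ hy) hdy b)
  have hrest : projOn X {(p, b, m + 1)}ᶜ (dV z) ∈ columnTruncation X p (m + 1) := by
    refine supportedIn_mono X ?_ (projOn_mem_inter (h.d_mem _ z hz))
    rintro ⟨a', b', c'⟩ ⟨hne, ha, hc, hdeg⟩
    simp only [Set.mem_compl_iff, Set.mem_singleton_iff, Prod.mk.injEq] at hne ha hc hdeg
    exact ⟨ha, fun _ => by lia⟩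
  rw [← hzy, ← add_sub_cancel_right (projOn X {(p, b, m + 1)} (dV z))
    (projOn X {(p, b, m + 1)}ᶜ (dV z)), projOn_add_projOn_compl]
  exact sub_mem (Submodule.mem_sup_right ⟨z, le_supportedIn X (le_refl p) hz, rfl⟩)
    (Submodule.mem_sup_left hrest)

theorem mem_sup_sup_of_mem_columnTruncation (h : IsSpectralResolution Y dU X dV ι) {p : ℤ} (m : ℕ) :
    ∀ {y : V}, y ∈ columnTruncation X p m →
      dV y ∈ firstFiltration X (p + 1) ⊔ LinearMap.range ι →
      y ∈ firstFiltration X (p + 1) ⊔ (firstFiltration Y p).map ι ⊔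
        (firstFiltration X p).map dV := by
  induction m with
  | zero => exact fun hy _ =>
      Submodule.mem_sup_left (Submodule.mem_sup_left (h.columnTruncation_zero_le p hy))
  | succ m ih =>
    intro y hy hdy
    cases m with
    | zero =>
      exact Submodule.mem_sup_left
        (h.mem_sup_map_ι_of_mem_columnTruncation_one (by simpa using hy) hdy)
    | succ m =>
      obtain ⟨w, hw, _, ⟨z, hz, rfl⟩, rfl⟩ := Submodule.mem_sup.1
        (h.mem_sup_map_d_of_mem_columnTruncation_add_two m.cast_nonneg hy hdy)
      refine add_mem (ih hw ?_) (Submodule.mem_sup_right ⟨z, hz, rfl⟩)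
      rwa [map_add, h.d_d, add_zero] at hdy

theorem isFilteredResolution (h : IsSpectralResolution Y dU X dV ι) :
    IsFilteredResolution (firstFiltration Y) (firstFiltration X) dU dV ι where
  antitone := firstFiltration_antitone X
  d_mem _ _ := h.d_mem_firstFiltration
  d_d := h.d_d
  comm := h.comm
  map_mem_iff := h.map_mem_firstFiltration_iff
  acyclic _ _ hy hdy :=
    have ⟨m, hm⟩ := exists_mem_columnTruncation hy
    h.mem_sup_sup_of_mem_columnTruncation m hm hdy

theorem map_mem_pageCycles_iff (h : IsSpectralResolution Y dU X dV ι) (a b : ℤ) (k : ℕ) (u : U) :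
    ι u ∈ pageCycles (triTotal X) (firstFiltration X) dV a b k ↔
      u ∈ pageCycles (biTotal Y) (firstFiltration Y) dU a b k := by
  simp only [pageCycles, Submodule.mem_inf, Submodule.mem_comap, ← h.comm,
    h.map_mem_triTotal_iff, h.map_mem_firstFiltration_iff]

theorem map_mem_pageBoundaries_iff (h : IsSpectralResolution Y dU X dV ι) (a b : ℤ) (k : ℕ)
    (u : U) :
    ι u ∈ pageBoundaries (triTotal X) (firstFiltration X) dV a b k ↔
      u ∈ pageBoundaries (biTotal Y) (firstFiltration Y) dU a b k :=
  and_congr (h.map_mem_pageCycles_iff a b k u) (h.isFilteredResolution.map_mem_sup_iff a k u)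

theorem exists_sub_mem_pageBoundaries (h : IsSpectralResolution Y dU X dV ι) {a b : ℤ} {k : ℕ}
    (hk : 1 ≤ k) {y : V} (hy : y ∈ pageCycles (triTotal X) (firstFiltration X) dV a b k) :
    ∃ u ∈ pageCycles (biTotal Y) (firstFiltration Y) dU a b k,
      y - ι u ∈ pageBoundaries (triTotal X) (firstFiltration X) dV a b k := by
  obtain ⟨⟨hy_total, hy_filt⟩, hdy⟩ := hy
  obtain ⟨x, hx, hdx, hyx⟩ := h.isFilteredResolution.exists_sub_mem_sup hk hy_filt hdy
  set S : Set (ℤ × ℤ × ℤ) := {i | i.1 + i.2.1 + i.2.2 = a + b}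
  set u := projOn Y {i | (i.1, i.2, 0) ∈ S} x
  have hιu : ι u = projOn X S (ι x) := (h.projOn_map_ι S x).symm
  have hu : u ∈ pageCycles (biTotal Y) (firstFiltration Y) dU a b k := by
    rw [← h.map_mem_pageCycles_iff, hιu]
    refine ⟨⟨projOn_mem S _, ?_⟩, ?_⟩
    · exact projOn_mem_firstFiltration S ((h.map_mem_firstFiltration_iff a x).2 hx)
    · change dV (projOn X S (ι x)) ∈ firstFiltration X (a + k)
      rw [← h.projOn_triTotal_d, ← h.comm]
      exact projOn_mem_firstFiltration _ ((h.map_mem_firstFiltration_iff _ _).2 hdx)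
  refine ⟨u, hu, sub_mem ⟨⟨hy_total, hy_filt⟩, hdy⟩ ((h.map_mem_pageCycles_iff a b k u).2 hu), ?_⟩
  have hyu : y - ι u = projOn X S (y - ι x) := by
    rw [map_sub, hιu, projOn_eq_self hy_total]
  exact hyu ▸ h.projOn_triTotal_mem_sup (a + b) hyx

end IsSpectralResolution

theorem statement11_general {Y : ℤ × ℤ → Submodule R U} [DirectSum.Decomposition Y]
    {dU : U →ₗ[R] U} {X : ℤ × ℤ × ℤ → Submodule R V} [DirectSum.Decomposition X]
    {dV : V →ₗ[R] V} {ι : U →ₗ[R] V} (h : IsSpectralResolution Y dU X dV ι)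
    (k : ℕ) (hk : 1 ≤ k) (a b : ℤ) :
    (∀ x ∈ pageCycles (biTotal Y) (firstFiltration Y) dU a b k,
      ι x ∈ pageCycles (triTotal X) (firstFiltration X) dV a b k) ∧
    (∀ x ∈ pageCycles (biTotal Y) (firstFiltration Y) dU a b k,
      (ι x ∈ pageBoundaries (triTotal X) (firstFiltration X) dV a b k ↔
        x ∈ pageBoundaries (biTotal Y) (firstFiltration Y) dU a b k)) ∧
    (∀ y ∈ pageCycles (triTotal X) (firstFiltration X) dV a b k,
      ∃ x ∈ pageCycles (biTotal Y) (firstFiltration Y) dU a b k,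
        y - ι x ∈ pageBoundaries (triTotal X) (firstFiltration X) dV a b k) ∧
    (∀ x ∈ pageCycles (biTotal Y) (firstFiltration Y) dU a b k, ι (dU x) = dV (ι x)) :=
  ⟨fun x hx => (h.map_mem_pageCycles_iff a b k x).2 hx,
    fun x _ => h.map_mem_pageBoundaries_iff a b k x,
    fun _ hy => h.exists_sub_mem_pageBoundaries hk hy, fun x _ => h.comm x⟩

end SpectralResolution

section Curried

variable {K U V : Type} [Field K] [AddCommGroup U] [Module K U] [AddCommGroup V] [Module K V]
  (Y : ℤ → ℤ → Submodule K U) (X : ℤ → ℤ → ℤ → Submodule K V)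

theorem totC_eq_biTotal : TotC Y = biTotal fun p => Y p.1 p.2 := by
  funext n
  simp only [TotC, biTotal, supportedIn, iSup_prod, Set.mem_ofPred_eq]

theorem geC_eq_firstFiltration : GeC Y = firstFiltration fun p => Y p.1 p.2 := by
  funext p
  simp only [GeC, firstFiltration, supportedIn, iSup_prod, Set.mem_ofPred_eq]
  exact iSup_congr fun a => iSup_comm

theorem totE_eq_triTotal : TotE X = triTotal fun p => X p.1 p.2.1 p.2.2 := by
  funext n
  simp only [TotE, triTotal, supportedIn, iSup_prod, Set.mem_ofPred_eq]

theorem geE_eq_firstFiltration :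
    GeE X = firstFiltration fun p : ℤ × ℤ × ℤ => X p.1 p.2.1 p.2.2 := by
  funext p
  simp only [GeE, firstFiltration, supportedIn, iSup_prod, Set.mem_ofPred_eq]
  refine iSup_congr fun a => ?_
  simp only [iSup_comm (ι := p ≤ a)]

theorem projE_eq_projOn [DirectSum.Decomposition fun p : ℤ × ℤ × ℤ => X p.1 p.2.1 p.2.2]
    (p : ℤ × ℤ × ℤ) (x : V) :
    projE X p x = projOn (fun p : ℤ × ℤ × ℤ => X p.1 p.2.1 p.2.2) {p} x :=
  (projOn_singleton_eq_decompose p x).symm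

theorem iSup_degree_le_eq_supportedIn (a b c : ℤ) :
    ⨆ (a' : ℤ) (_ : a ≤ a') (b' : ℤ) (c' : ℤ) (_ : c' ≤ c + 1)
        (_ : a' + b' + c' = a + b + c + 1), X a' b' c' =
      supportedIn (fun p : ℤ × ℤ × ℤ => X p.1 p.2.1 p.2.2)
        {j | a ≤ j.1 ∧ j.2.2 ≤ c + 1 ∧ j.1 + j.2.1 + j.2.2 = a + b + c + 1} := by
  simp only [supportedIn, iSup_prod, Set.mem_ofPred_eq, iSup_and]
  refine iSup_congr fun a' => ?_
  simp only [iSup_comm (ι := a ≤ a')]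

end Curried

end S11

open S11 in
/-- spectral resolution lemma: let `(C^{•,•}, d)` be a bi-indexed
differential complex whose differential preserves the filtration induced by the first index,
and let `(E^{•,•,•}, ∂)` together with `ι` be a spectral resolution of `(C^{•,•}, d)`. Then,
for every `k ≥ 1` and all integers `a, b`, the map induced by `ι` is an isomorphism
`ᴵC_k^{a,b} ≅ ᴵE_k^{a,b}` between the `k`-th pages of the spectral sequences induced by the
filtrations by the first index (compatibly with the differentials of the pages, which are
induced by `d` and `∂`). -/
theorem statement11
    {K : Type} [Field K]
    -- the bi-indexed differential complex (C^{•,•}, d)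
    {U : Type} [AddCommGroup U] [Module K U]
    (Y : ℤ → ℤ → Submodule K U)
    (hYinternal : DirectSum.IsInternal (fun p : ℤ × ℤ => Y p.1 p.2))
    (hYvanish : ∀ a b : ℤ, a < 0 ∨ b < 0 → Y a b = ⊥)
    (dC : U →ₗ[K] U)
    (hdCdeg : ∀ a b : ℤ, ∀ x ∈ Y a b,
      dC x ∈ ⨆ (a' : ℤ) (_ : a ≤ a') (b' : ℤ) (_ : a' + b' = a + b + 1), Y a' b')
    (hdCdC : ∀ x, dC (dC x) = 0)
    -- the triply indexed differential complex (E^{•,•,•}, ∂)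
    {V : Type} [AddCommGroup V] [Module K V]
    (X : ℤ → ℤ → ℤ → Submodule K V)
    [DirectSum.Decomposition (fun p : ℤ × ℤ × ℤ => X p.1 p.2.1 p.2.2)]
    (hXvanish : ∀ a b c : ℤ, a < 0 ∨ b < 0 ∨ c < 0 → X a b c = ⊥)
    (dE : V →ₗ[K] V)
    -- ∂ has total degree one, preserves the filtration by the first index (R2), and has no
    -- components `∂^{i,j,l}` with `l ≥ 2` (R3)
    (hdEdeg : ∀ a b c : ℤ, ∀ x ∈ X a b c,
      dE x ∈ ⨆ (a' : ℤ) (_ : a ≤ a') (b' : ℤ) (c' : ℤ) (_ : c' ≤ c + 1)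
        (_ : a' + b' + c' = a + b + c + 1), X a' b' c')
    (hdEdE : ∀ x, dE (dE x) = 0)
    -- the injections ι : C^{a,b} ↪ E^{a,b,0}
    (ι : U →ₗ[K] V)
    (hιmem : ∀ a b : ℤ, ∀ x ∈ Y a b, ι x ∈ X a b 0)
    (hιinj : ∀ a b : ℤ, ∀ x ∈ Y a b, ι x = 0 → x = 0)
    -- (R1) : ι ∘ d = ∂ ∘ ι
    (hR1 : ∀ x : U, ι (dC x) = dE (ι x))
    -- (R4) : for every a, b the sequence 0 → C^{a,b} → E^{a,b,0} → E^{a,b,1} → ⋯ with first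
    -- map ι and subsequent maps ∂₃ = ∂^{0,0,1} is exact
    (hR4a : ∀ a b : ℤ, ∀ x ∈ X a b 0,
      (projE X (a, b, 1) (dE x) = 0 ↔ ∃ u ∈ Y a b, ι u = x))
    (hR4b : ∀ a b c : ℤ, 0 ≤ c → ∀ x ∈ X a b (c + 1),
      (projE X (a, b, c + 2) (dE x) = 0 ↔ ∃ y ∈ X a b c, projE X (a, b, c + 1) (dE y) = x)) :
    ∀ k : ℕ, 1 ≤ k → ∀ a b : ℤ,
      (∀ x ∈ ZC Y dC a b k, ι x ∈ ZE X dE a b k) ∧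
      (∀ x ∈ ZC Y dC a b k, (ι x ∈ DenE X dE a b k ↔ x ∈ DenC Y dC a b k)) ∧
      (∀ y ∈ ZE X dE a b k, ∃ x ∈ ZC Y dC a b k, y - ι x ∈ DenE X dE a b k) ∧
      (∀ x ∈ ZC Y dC a b k, ι (dC x) = dE (ι x)) := by
  intro k hk a b
  let _ := hYinternal.chooseDecomposition
  simp only [projE_eq_projOn] at hR4a hR4b
  have h : IsSpectralResolution (fun p => Y p.1 p.2) dC (fun p => X p.1 p.2.1 p.2.2) dE ι :=
    { eq_bot_of_neg := fun a b c hc => hXvanish a b c (.inr (.inr hc))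
      d_mem := fun i x hx => iSup_degree_le_eq_supportedIn X _ _ _ ▸ hdEdeg _ _ _ x hx
      d_d := hdEdE
      map_mem := hιmem
      injOn := hιinj
      comm := hR1
      exact_zero := fun a b x hx => (hR4a a b x hx).1
      exact_succ := fun a b c hc x hx => (hR4b a b c hc x hx).1 }
  simp only [ZC, DenC, ZE, DenE, totC_eq_biTotal, geC_eq_firstFiltration, totE_eq_triTotal,
    geE_eq_firstFiltration]
  exact statement11_general h k hk a b
end

section
/- Let (H, N₁, N₂) be a bigraded Hodge–Lefschetz structure. For every pair of integers a, b ≥ 0 there is a direct sum decomposition H_{a,b} = ⨁_{r,s ≥ 0} N₁^r N₂^s (P_{a+2r, b+2s}), where each map N₁^r N₂^s is injective on P_{a+2r, b+2s}. -/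
namespace HLS

variable {H : Type} [AddCommGroup H] [Module ℝ H]

/-- The primitive part `P_{a,b} = H_{a,b} ∩ ker(N₁^{a+1}) ∩ ker(N₂^{b+1})`, for `a, b ≥ 0`. -/
def prim (Hgr : ℤ → ℤ → Submodule ℝ H) (N₁ N₂ : H →ₗ[ℝ] H) (a b : ℕ) : Submodule ℝ H :=
  Hgr (a : ℤ) (b : ℤ) ⊓ LinearMap.ker (N₁ ^ (a + 1)) ⊓ LinearMap.ker (N₂ ^ (b + 1))

/-- A bigraded Hodge–Lefschetz structure: a finite-dimensional real vector space `H`,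
a direct sum decomposition `H = ⨁_{(a,b)} H_{a,b}`, and commuting operators `N₁, N₂` of
bidegrees `(-2,0)` and `(0,-2)` with `N₁^a : H_{a,b} → H_{-a,b}` and
`N₂^b : H_{a,b} → H_{a,-b}` isomorphisms for `a ≥ 0`, resp. `b ≥ 0`. -/
structure IsHL (Hgr : ℤ → ℤ → Submodule ℝ H) (N₁ N₂ : H →ₗ[ℝ] H) : Prop where
  findim : FiniteDimensional ℝ H
  internal : DirectSum.IsInternal (fun p : ℤ × ℤ => Hgr p.1 p.2)
  mapN₁ : ∀ a b : ℤ, ∀ x ∈ Hgr a b, N₁ x ∈ Hgr (a - 2) b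
  mapN₂ : ∀ a b : ℤ, ∀ x ∈ Hgr a b, N₂ x ∈ Hgr a (b - 2)
  comm : N₁ ∘ₗ N₂ = N₂ ∘ₗ N₁
  bijN₁ : ∀ (a : ℕ) (b : ℤ),
    Submodule.map (N₁ ^ a) (Hgr (a : ℤ) b) = Hgr (-(a : ℤ)) b ∧
    ∀ x ∈ Hgr (a : ℤ) b, (N₁ ^ a) x = 0 → x = 0
  bijN₂ : ∀ (a : ℤ) (b : ℕ),
    Submodule.map (N₂ ^ b) (Hgr a (b : ℤ)) = Hgr a (-(b : ℤ)) ∧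
    ∀ x ∈ Hgr a (b : ℤ), (N₂ ^ b) x = 0 → x = 0

/-- A polarization on a bigraded Hodge–Lefschetz structure. -/
structure IsPolarization (Hgr : ℤ → ℤ → Submodule ℝ H) (N₁ N₂ : H →ₗ[ℝ] H)
    (ψ : H →ₗ[ℝ] H →ₗ[ℝ] ℝ) : Prop where
  orth : ∀ a b a' b' : ℤ, ¬ (a + a' = 0 ∧ b + b' = 0) →
    ∀ x ∈ Hgr a b, ∀ y ∈ Hgr a' b', ψ x y = 0
  primSymm : ∀ a b : ℕ, ∀ x ∈ prim Hgr N₁ N₂ a b, ∀ y ∈ prim Hgr N₁ N₂ a b,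
    ψ x (((N₁ ^ a) ∘ₗ (N₂ ^ b)) y) = ψ y (((N₁ ^ a) ∘ₗ (N₂ ^ b)) x)
  primPosDef : ∀ a b : ℕ, ∀ x ∈ prim Hgr N₁ N₂ a b, x ≠ 0 →
    0 < ψ x (((N₁ ^ a) ∘ₗ (N₂ ^ b)) x)
  skew₁ : ∀ x y : H, ψ (N₁ x) y + ψ x (N₁ y) = 0
  skew₂ : ∀ x y : H, ψ (N₂ x) y + ψ x (N₂ y) = 0

/-- The defining property of the operator `w`:
`w(N₁^r N₂^s x) = (-1)^{r+s} (r!/(a-r)!)(s!/(b-s)!) N₁^{a-r} N₂^{b-s} x` for `x ∈ P_{a,b}`,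
`r ≤ a`, `s ≤ b`, and `w(N₁^r N₂^s x) = 0` otherwise.  (By the primitive decomposition this
determines `w` uniquely.) -/
def IsW (Hgr : ℤ → ℤ → Submodule ℝ H) (N₁ N₂ : H →ₗ[ℝ] H) (w : H →ₗ[ℝ] H) : Prop :=
  ∀ a b r s : ℕ, ∀ x ∈ prim Hgr N₁ N₂ a b,
    w (((N₁ ^ r) ∘ₗ (N₂ ^ s)) x) =
      if r ≤ a ∧ s ≤ b then
        ((-1 : ℝ) ^ (r + s) * ((r.factorial : ℝ) / ((a - r).factorial : ℝ)) *
          ((s.factorial : ℝ) / ((b - s).factorial : ℝ))) •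
          (((N₁ ^ (a - r)) ∘ₗ (N₂ ^ (b - s))) x)
      else 0

/-- A differential on a polarized bigraded Hodge–Lefschetz structure. -/
structure IsDifferential (Hgr : ℤ → ℤ → Submodule ℝ H) (N₁ N₂ : H →ₗ[ℝ] H)
    (ψ : H →ₗ[ℝ] H →ₗ[ℝ] ℝ) (dd : H →ₗ[ℝ] H) : Prop where
  mem : ∀ a b : ℤ, ∀ x ∈ Hgr a b, dd x ∈ Hgr (a - 1) (b - 1)
  sq : ∀ x, dd (dd x) = 0
  commN₁ : dd ∘ₗ N₁ = N₁ ∘ₗ dd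
  commN₂ : dd ∘ₗ N₂ = N₂ ∘ₗ dd
  skew : ∀ x y : H, ψ (dd x) y + ψ x (dd y) = 0

/-- The codifferential `d* = - w⁻¹ ∘ d ∘ w`. -/
def dstar (w winv dd : H →ₗ[ℝ] H) : H →ₗ[ℝ] H := -(winv ∘ₗ dd ∘ₗ w)

/-- The Laplacian `Δ = d d* + d* d`. -/
def lap (w winv dd : H →ₗ[ℝ] H) : H →ₗ[ℝ] H :=
  dd ∘ₗ dstar w winv dd + dstar w winv dd ∘ₗ dd

end HLS

/-!
For a single operator, `K a = P a ⊕ N (K (a + 2))` for every `a ≥ 0`: if `x ∈ K a`, then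
`N ^ (a + 1) x ∈ K (-(a + 2))` is of the form `N ^ (a + 2) y` with `y ∈ K (a + 2)`, and `x - N y`
is primitive. Iterating gives `K a = ⨁ r, N ^ r (P (a + 2 r))`. The iteration stops because
`N ^ (n + 1 + (a + 1)) x = 0` implies `N ^ (n + (a + 3)) y = 0`, so the excess `n + 1` drops by one
at each step.

For two commuting operators, the `N₁`-primitive parts of `K a •` form the kernel of `N₁ ^ (a + 1)`,
which is a morphism of Lefschetz families for `N₂`. Hence they are again a Lefschetz family for
`N₂`, and the decomposition for `N₂` applies to each summand of the decomposition for `N₁`.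
-/

namespace HLS

section Lattice

variable {α ι κ : Type*} [CompleteLattice α] [IsModularLattice α] [IsCompactlyGenerated α]

lemma iSupIndep_of_disjoint_antitone_succ {F G : ℕ → α} (hF : Antitone F)
    (hG : ∀ n, G n ≤ F n) (hd : ∀ n, Disjoint (G n) (F (n + 1))) : iSupIndep G := by
  refine iSupIndep_iff_supIndep.mpr fun s => ?_
  induction s using Finset.induction_on_min with
  | empty => exact Finset.supIndep_empty G
  | insert n s hlt hs =>
    exact hs.insert <| (hd n).mono_right <|
      Finset.sup_le fun m hm => (hG m).trans (hF (hlt m hm))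

lemma iSupIndep_prod {f : ι × κ → α} (hf : iSupIndep fun i => ⨆ j, f (i, j))
    (hfi : ∀ i, iSupIndep fun j => f (i, j)) : iSupIndep f := by
  classical
  refine iSupIndep_iff_supIndep.mpr fun s => ?_
  refine Finset.SupIndep.subset ?_ Finset.subset_product
  rw [Finset.product_eq_biUnion]
  refine Finset.SupIndep.biUnion ?_ fun i _ => ((hfi i).supIndep' _).image
  refine (hf.supIndep' _).mono fun i _ => ?_
  rw [Finset.sup_image]
  exact Finset.sup_le fun j _ => le_iSup (fun j => f (i, j)) j

end Lattice

section Submodule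

variable {R M M' : Type*} [Ring R] [AddCommGroup M] [Module R M] [AddCommGroup M'] [Module R M']

lemma bijOn_of_map_eq {f : M →ₗ[R] M'} {p : Submodule R M} {q : Submodule R M'}
    (hmap : p.map f = q) (hker : ∀ x ∈ p, f x = 0 → x = 0) : Set.BijOn f p q := by
  subst hmap
  exact (LinearMap.disjoint_ker_iff_injOn.mp (LinearMap.disjoint_ker.mpr hker)).bijOn_image

lemma disjoint_map_of_injOn {f : M →ₗ[R] M'} {p q S : Submodule R M} (hpq : Disjoint p q)
    (hp : p ≤ S) (hq : q ≤ S) (hf : Set.InjOn f S) : Disjoint (p.map f) (q.map f) := by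
  rw [Submodule.disjoint_def]
  rintro _ ⟨x, hx, rfl⟩ ⟨y, hy, hyx⟩
  obtain rfl : y = x := hf (hq hy) (hp hx) hyx
  rw [Submodule.disjoint_def.mp hpq y hx hy, map_zero]

lemma iSupIndep_map_of_injOn {ι : Type*} {f : M →ₗ[R] M'} {p : ι → Submodule R M}
    (hp : iSupIndep p) (hf : Set.InjOn f (⨆ i, p i : Submodule R M)) :
    iSupIndep fun i => (p i).map f := by
  intro i
  simp only [← Submodule.map_iSup]
  exact disjoint_map_of_injOn (hp i) (le_iSup p i) (iSup₂_le fun j _ => le_iSup p j) hf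

end Submodule

section Lefschetz

variable {R M M' : Type*} [Ring R] [AddCommGroup M] [Module R M] [AddCommGroup M'] [Module R M']
  {K : ℤ → Submodule R M} {N : Module.End R M} {L : ℤ → Submodule R M'} {N' : Module.End R M'}

/-- The Lefschetz property of an operator `N` of degree `-2` on a family `K` of submodules:
`N ^ a` maps `K a` bijectively onto `K (-a)` for all `a ≥ 0`. The `K a` need be neither
independent nor spanning. -/
structure IsLefschetz (K : ℤ → Submodule R M) (N : Module.End R M) : Prop where
  map_mem : ∀ a, ∀ x ∈ K a, N x ∈ K (a - 2)
  bijOn_pow : ∀ a : ℕ, Set.BijOn (N ^ a) (K a) (K (-a))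

/-- The primitive part of degree `a ≥ 0` with respect to a single operator. -/
def primitive (K : ℤ → Submodule R M) (N : Module.End R M) (a : ℕ) : Submodule R M :=
  K a ⊓ LinearMap.ker (N ^ (a + 1))

lemma map_iSup_map_primitive_le (K : ℤ → Submodule R M) (N : Module.End R M) (a : ℕ) :
    (⨆ r : ℕ, (primitive K N (a + 2 + 2 * r)).map (N ^ r)).map N ≤
      ⨆ r : ℕ, (primitive K N (a + 2 * r)).map (N ^ r) := by
  rw [Submodule.map_iSup]
  refine iSup_le fun r => le_iSup_of_le (r + 1) (le_of_eq ?_)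
  rw [← Submodule.map_comp, ← Module.End.mul_eq_comp, ← pow_succ']
  congr 2
  ring

namespace IsLefschetz

lemma pow_mem (h : IsLefschetz K N) (r : ℕ) {a : ℤ} {x : M} (hx : x ∈ K a) :
    (N ^ r) x ∈ K (a - 2 * r) := by
  induction r with
  | zero => simpa using hx
  | succ r ih =>
    rw [pow_succ', Module.End.mul_apply]
    convert h.map_mem _ _ ih using 2
    push_cast
    ring

lemma map_pow_le (h : IsLefschetz K N) (r a : ℕ) :
    (K ((a + 2 * r : ℕ) : ℤ)).map (N ^ r) ≤ K a := by
  rintro _ ⟨x, hx, rfl⟩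
  simpa using h.pow_mem r hx

lemma map_le (h : IsLefschetz K N) (a : ℕ) : (K ((a + 2 : ℕ) : ℤ)).map N ≤ K a := by
  simpa using h.map_pow_le 1 a

lemma injOn_pow (h : IsLefschetz K N) {r a : ℕ} (hr : r ≤ a) :
    Set.InjOn (N ^ r) (K (a : ℤ)) := by
  have hinj := (h.bijOn_pow a).injOn
  rw [← Nat.sub_add_cancel hr, pow_add, Module.End.coe_mul] at hinj
  simpa only [Nat.sub_add_cancel hr] using hinj.of_comp

lemma inf_ker (hK : IsLefschetz K N) (hL : IsLefschetz L N') (f : M →ₗ[R] M')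
    (hf : ∀ a, ∀ x ∈ K a, f x ∈ L a) (hcomm : ∀ x, f (N x) = N' (f x)) :
    IsLefschetz (fun a => K a ⊓ LinearMap.ker f) N := by
  have hcomm_pow (n : ℕ) (x : M) : f ((N ^ n) x) = (N' ^ n) (f x) := by
    simpa only [Module.End.coe_pow] using (Function.Semiconj.iterate_right hcomm n) x
  have hmap (n : ℕ) {x : M} (hx : f x = 0) : f ((N ^ n) x) = 0 := by
    rw [hcomm_pow, hx, map_zero]
  refine ⟨fun a x hx => ⟨hK.map_mem a x hx.1, by simpa using hmap 1 hx.2⟩, fun a => ⟨?_, ?_, ?_⟩⟩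
  · exact fun x hx => ⟨(hK.bijOn_pow a).mapsTo hx.1, hmap a hx.2⟩
  · exact (hK.bijOn_pow a).injOn.mono fun x hx => hx.1
  · rintro y ⟨hyK, hfy⟩
    obtain ⟨x, hxK, rfl⟩ := (hK.bijOn_pow a).surjOn hyK
    have hNfx : (N' ^ a) (f x) = (N' ^ a) 0 := by
      rw [← hcomm_pow, map_zero]
      exact hfy
    exact ⟨x, ⟨hxK, (hL.bijOn_pow a).injOn (hf a x hxK) (zero_mem _) hNfx⟩, rfl⟩

lemma disjoint_primitive_map (h : IsLefschetz K N) (a : ℕ) :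
    Disjoint (primitive K N a) ((K ((a + 2 : ℕ) : ℤ)).map N) := by
  rw [Submodule.disjoint_def]
  rintro _ ⟨-, hker⟩ ⟨y, hy, rfl⟩
  have hNy : (N ^ (a + 2)) y = (N ^ (a + 2)) 0 := by
    rw [pow_succ, Module.End.mul_apply, map_zero]
    exact hker
  rw [(h.bijOn_pow (a + 2)).injOn hy (zero_mem _) hNy, map_zero]

lemma exists_primitive_add_eq (h : IsLefschetz K N) {a : ℕ} {x : M} (hx : x ∈ K a) :
    ∃ p ∈ primitive K N a, ∃ y ∈ K ((a + 2 : ℕ) : ℤ), p + N y = x := by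
  have hNx : (N ^ (a + 1)) x ∈ K (-((a + 2 : ℕ) : ℤ)) := by
    convert h.pow_mem (a + 1) hx using 2
    push_cast
    ring
  obtain ⟨y, hy, hyx⟩ := (h.bijOn_pow (a + 2)).surjOn hNx
  refine ⟨x - N y, ⟨sub_mem hx (h.map_le a ⟨y, hy, rfl⟩), ?_⟩, y, hy, sub_add_cancel x (N y)⟩
  change (N ^ (a + 1)) (x - N y) = 0
  rw [map_sub, ← hyx, ← Module.End.mul_apply, ← pow_succ, sub_self]

lemma iSupIndep_map_primitive (h : IsLefschetz K N) (a : ℕ) :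
    iSupIndep fun r : ℕ => (primitive K N (a + 2 * r)).map (N ^ r) := by
  have hsucc (r : ℕ) : (K ((a + 2 * (r + 1) : ℕ) : ℤ)).map (N ^ (r + 1)) =
      ((K ((a + 2 * r + 2 : ℕ) : ℤ)).map N).map (N ^ r) := by
    rw [← Submodule.map_comp, ← Module.End.mul_eq_comp, ← pow_succ, mul_add_one, add_assoc]
  refine iSupIndep_of_disjoint_antitone_succ
    (F := fun r => (K ((a + 2 * r : ℕ) : ℤ)).map (N ^ r)) (antitone_nat_of_succ_le fun r => ?_)
    (fun r => Submodule.map_mono inf_le_left) fun r => ?_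
  · rw [hsucc]
    exact Submodule.map_mono (h.map_le _)
  · rw [hsucc]
    exact disjoint_map_of_injOn (h.disjoint_primitive_map _) inf_le_left (h.map_le _)
      (h.injOn_pow (by lia))

lemma mem_iSup_map_primitive (h : IsLefschetz K N) (n : ℕ) {a : ℕ} {x : M} (hx : x ∈ K a)
    (hn : (N ^ (n + (a + 1))) x = 0) :
    x ∈ ⨆ r : ℕ, (primitive K N (a + 2 * r)).map (N ^ r) := by
  induction n generalizing a x with
  | zero =>
    exact Submodule.mem_iSup_of_mem 0 ⟨x, ⟨hx, by simpa using hn⟩, rfl⟩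
  | succ n ih =>
    obtain ⟨p, hp, y, hy, rfl⟩ := h.exists_primitive_add_eq hx
    have hpn : (N ^ (n + 1 + (a + 1))) p = 0 := by
      rw [pow_add, Module.End.mul_apply, hp.2, map_zero]
    have hyn : (N ^ (n + (a + 2 + 1))) y = 0 := by
      rw [map_add, hpn, zero_add, ← Module.End.mul_apply, ← pow_succ] at hn
      convert hn using 3
      ring
    refine add_mem (Submodule.mem_iSup_of_mem 0 ⟨p, hp, rfl⟩) ?_
    exact map_iSup_map_primitive_le K N a ⟨y, ih hy hyn, rfl⟩

lemma iSup_map_primitive (h : IsLefschetz K N) {a : ℕ} (hnil : ∀ x ∈ K a, ∃ n, (N ^ n) x = 0) :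
    ⨆ r : ℕ, (primitive K N (a + 2 * r)).map (N ^ r) = K a := by
  refine le_antisymm (iSup_le fun r => ?_) fun x hx => ?_
  · exact (Submodule.map_mono inf_le_left).trans (h.map_pow_le r a)
  · obtain ⟨n, hn⟩ := hnil x hx
    refine h.mem_iSup_map_primitive n hx ?_
    rw [add_comm, pow_add, Module.End.mul_apply, hn, map_zero]

lemma exists_pow_apply_eq_zero (h : IsLefschetz K N) (hK : {a | K a ≠ ⊥}.Finite) {a : ℤ} {x : M}
    (hx : x ∈ K a) : ∃ n, (N ^ n) x = 0 := by
  have hinj : Function.Injective fun n : ℕ => a - 2 * (n : ℤ) := fun m n hmn => by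
    simpa using hmn
  obtain ⟨n, hn⟩ := (hK.preimage hinj.injOn).exists_notMem
  have hbot : K (a - 2 * n) = ⊥ := not_not.mp hn
  exact ⟨n, by simpa [hbot] using h.pow_mem n hx⟩

end IsLefschetz

end Lefschetz

section Bigraded

variable {R M : Type*} [Ring R] [AddCommGroup M] [Module R M]
  {K : ℤ → ℤ → Submodule R M} {N₁ N₂ : Module.End R M}

/-- The primitive part of bidegree `(a, b)`, as in `prim` but over an arbitrary ring. -/
def biprimitive (K : ℤ → ℤ → Submodule R M) (N₁ N₂ : Module.End R M) (a b : ℕ) :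
    Submodule R M :=
  K a b ⊓ LinearMap.ker (N₁ ^ (a + 1)) ⊓ LinearMap.ker (N₂ ^ (b + 1))

lemma primitive_primitive (K : ℤ → ℤ → Submodule R M) (N₁ N₂ : Module.End R M) (a b : ℕ) :
    primitive (fun j => primitive (fun i => K i j) N₁ a) N₂ b = biprimitive K N₁ N₂ a b :=
  rfl

lemma isLefschetz_primitive (h₁ : ∀ b, IsLefschetz (fun a => K a b) N₁)
    (h₂ : ∀ a, IsLefschetz (K a) N₂) (hcomm : Commute N₁ N₂) (a : ℕ) :
    IsLefschetz (fun b => primitive (fun i => K i b) N₁ a) N₂ :=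
  (h₂ a).inf_ker (h₂ (a - 2 * (a + 1 : ℕ))) (N₁ ^ (a + 1))
    (fun b _ hx => (h₁ b).pow_mem (a + 1) hx) (LinearMap.congr_fun (hcomm.pow_left (a + 1)).eq)

lemma iSup_map_biprimitive (h₁ : ∀ b, IsLefschetz (fun a => K a b) N₁)
    (h₂ : ∀ a, IsLefschetz (K a) N₂) (hcomm : Commute N₁ N₂) (f : Module.End R M)
    {a b : ℕ} (hnil : ∀ x ∈ K a b, ∃ n, (N₂ ^ n) x = 0) :
    (⨆ s : ℕ, (biprimitive K N₁ N₂ a (b + 2 * s)).map (f ∘ₗ (N₂ ^ s))) =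
      (primitive (fun i => K i b) N₁ a).map f := by
  simp only [Submodule.map_comp, ← Submodule.map_iSup, ← primitive_primitive]
  rw [(isLefschetz_primitive h₁ h₂ hcomm a).iSup_map_primitive fun x hx => hnil x hx.1]

end Bigraded

section Structure

variable {H : Type} [AddCommGroup H] [Module ℝ H] {Hgr : ℤ → ℤ → Submodule ℝ H}
  {N₁ N₂ : H →ₗ[ℝ] H}

namespace IsHL

lemma isLefschetz_fst (h : IsHL Hgr N₁ N₂) (b : ℤ) : IsLefschetz (fun a => Hgr a b) N₁ where
  map_mem a := h.mapN₁ a b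
  bijOn_pow a := (h.bijN₁ a b).elim bijOn_of_map_eq

lemma isLefschetz_snd (h : IsHL Hgr N₁ N₂) (a : ℤ) : IsLefschetz (Hgr a) N₂ where
  map_mem := h.mapN₂ a
  bijOn_pow b := (h.bijN₂ a b).elim bijOn_of_map_eq

lemma finite_ne_bot (h : IsHL Hgr N₁ N₂) : {p : ℤ × ℤ | Hgr p.1 p.2 ≠ ⊥}.Finite :=
  have := h.findim
  WellFoundedGT.finite_ne_bot_of_iSupIndep h.internal.submodule_iSupIndep

lemma exists_pow_fst_apply_eq_zero (h : IsHL Hgr N₁ N₂) (a b : ℤ) (x : H) (hx : x ∈ Hgr a b) :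
    ∃ n, (N₁ ^ n) x = 0 :=
  (h.isLefschetz_fst b).exists_pow_apply_eq_zero
    (h.finite_ne_bot.preimage (Prod.mk_left_injective b).injOn) hx

lemma exists_pow_snd_apply_eq_zero (h : IsHL Hgr N₁ N₂) (a b : ℤ) (x : H) (hx : x ∈ Hgr a b) :
    ∃ n, (N₂ ^ n) x = 0 :=
  (h.isLefschetz_snd a).exists_pow_apply_eq_zero
    (h.finite_ne_bot.preimage (Prod.mk_right_injective a).injOn) hx

end IsHL

end Structure

end HLS

open HLS in
theorem statement12_general {R M : Type*} [Ring R] [AddCommGroup M] [Module R M]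
    {K : ℤ → ℤ → Submodule R M} {N₁ N₂ : Module.End R M}
    (h₁ : ∀ b, IsLefschetz (fun a => K a b) N₁) (h₂ : ∀ a, IsLefschetz (K a) N₂)
    (hcomm : Commute N₁ N₂) (hnil₁ : ∀ a b, ∀ x ∈ K a b, ∃ n, (N₁ ^ n) x = 0)
    (hnil₂ : ∀ a b, ∀ x ∈ K a b, ∃ n, (N₂ ^ n) x = 0) (a b : ℕ) :
    K a b = (⨆ rs : ℕ × ℕ, (biprimitive K N₁ N₂ (a + 2 * rs.1) (b + 2 * rs.2)).map
      ((N₁ ^ rs.1) ∘ₗ (N₂ ^ rs.2))) ∧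
    (iSupIndep fun rs : ℕ × ℕ => (biprimitive K N₁ N₂ (a + 2 * rs.1) (b + 2 * rs.2)).map
      ((N₁ ^ rs.1) ∘ₗ (N₂ ^ rs.2))) ∧
    ∀ rs : ℕ × ℕ, Set.InjOn ⇑((N₁ ^ rs.1) ∘ₗ (N₂ ^ rs.2))
      (biprimitive K N₁ N₂ (a + 2 * rs.1) (b + 2 * rs.2) : Set M) := by
  have hP (r : ℕ) := isLefschetz_primitive h₁ h₂ hcomm (a + 2 * r)
  have hrow (r : ℕ) := iSup_map_biprimitive h₁ h₂ hcomm (N₁ ^ r) (hnil₂ (a + 2 * r : ℕ) b)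
  have hinj (r : ℕ) : Set.InjOn (N₁ ^ r) (primitive (fun i => K i b) N₁ (a + 2 * r)) :=
    ((h₁ b).injOn_pow (by lia)).mono inf_le_left
  refine ⟨?_, iSupIndep_prod ?_ fun r => ?_, fun ⟨r, s⟩ => ?_⟩
  · rw [iSup_prod]
    simp only [hrow]
    exact ((h₁ b).iSup_map_primitive (hnil₁ a b)).symm
  · simp only [hrow]
    exact (h₁ b).iSupIndep_map_primitive a
  · simp only [Submodule.map_comp, ← primitive_primitive]
    refine iSupIndep_map_of_injOn ((hP r).iSupIndep_map_primitive b) ?_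
    rw [(hP r).iSup_map_primitive fun x hx => hnil₂ _ _ x hx.1]
    exact hinj r
  · exact (hinj r).comp (((hP r).injOn_pow (by lia)).mono inf_le_left) fun x hx =>
      (hP r).map_pow_le s b ⟨x, hx.1, rfl⟩

open HLS in
/-- for a bigraded Hodge–Lefschetz structure `(H, N₁, N₂)` and every pair of
integers `a, b ≥ 0`, there is a direct sum decomposition
`H_{a,b} = ⨁_{r,s ≥ 0} N₁^r N₂^s (P_{a+2r, b+2s})`, and each `N₁^r N₂^s` is injective on
`P_{a+2r, b+2s}`. -/
theorem statement12
    {H : Type} [AddCommGroup H] [Module ℝ H]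
    (Hgr : ℤ → ℤ → Submodule ℝ H) (N₁ N₂ : H →ₗ[ℝ] H)
    (hHL : IsHL Hgr N₁ N₂) (a b : ℕ) :
    (Hgr (a : ℤ) (b : ℤ) =
      ⨆ rs : ℕ × ℕ,
        Submodule.map ((N₁ ^ rs.1) ∘ₗ (N₂ ^ rs.2))
          (prim Hgr N₁ N₂ (a + 2 * rs.1) (b + 2 * rs.2))) ∧
    (∀ rs : ℕ × ℕ,
      Disjoint
        (Submodule.map ((N₁ ^ rs.1) ∘ₗ (N₂ ^ rs.2))
          (prim Hgr N₁ N₂ (a + 2 * rs.1) (b + 2 * rs.2)))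
        (⨆ (rs' : ℕ × ℕ) (_ : rs' ≠ rs),
          Submodule.map ((N₁ ^ rs'.1) ∘ₗ (N₂ ^ rs'.2))
            (prim Hgr N₁ N₂ (a + 2 * rs'.1) (b + 2 * rs'.2)))) ∧
    (∀ rs : ℕ × ℕ, ∀ x ∈ prim Hgr N₁ N₂ (a + 2 * rs.1) (b + 2 * rs.2),
      ((N₁ ^ rs.1) ∘ₗ (N₂ ^ rs.2)) x = 0 → x = 0) := by
  obtain ⟨hsup, hindep, hinj⟩ := statement12_general hHL.isLefschetz_fst hHL.isLefschetz_snd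
    hHL.comm hHL.exists_pow_fst_apply_eq_zero hHL.exists_pow_snd_apply_eq_zero a b
  exact ⟨hsup, hindep, fun rs x hx h0 => hinj rs hx (zero_mem _) (h0.trans (map_zero _).symm)⟩
end

section
/- Let (H, N₁, N₂, ψ) be a polarized bigraded Hodge–Lefschetz structure. Then: (i) the operator w is invertible, and w^{−1}(N₁^r N₂^s x) = (−1)^{a+b} w(N₁^r N₂^s x) for all a, b, r, s ≥ 0 and x ∈ P_{a,b}; (ii) the bilinear form φ(x, y) = ψ(x, w y) is symmetric and positive definite on H; (iii) the primitive decomposition is orthogonal for φ: for all a, b, r, s, a', b', r', s' ≥ 0, x ∈ P_{a,b} and y ∈ P_{a',b'}, one has φ(N₁^r N₂^s x, N₁^{r'} N₂^{s'} y) = 0 unless r = r', s = s', a = a' and b = b'. -/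
/-!
Peeling off primitive parts from the top degree downwards, first for `N₁` and then for `N₂` on
`ker N₁^{a+1}`, shows that the pieces `N₁^r N₂^s P_{a,b}` span `H`. On such a piece `w²` is the
scalar `(-1)^{a+b}`, so `w⁴ = 1`. By degree reasons and skewness of `N₁`, `N₂`, the pairing
`ψ(x, N₁^m N₂^n y)` of primitive elements of bidegrees `(a, b)` and `(a', b')` vanishes unless
`m = a = a'` and `n = b = b'`. Hence distinct pieces are `φ`-orthogonal, and on a nonzero piece `φ`
is a positive multiple of the form `ψ(x, N₁^a N₂^b y)`, the sign in `w` cancelling the one produced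
by skewness.
-/

namespace HLS

section Bilinear

variable {R M ι : Type*} [CommSemiring R] [AddCommMonoid M] [Module R M]
  {B : LinearMap.BilinForm R M} {p : ι → Submodule R M}

theorem isSymm_of_iSup_eq_top (hp : ⨆ i, p i = ⊤)
    (hB : ∀ i j, ∀ x ∈ p i, ∀ y ∈ p j, B x y = B y x) : B.IsSymm := by
  have left_mem (i : ι) (x : M) (hx : x ∈ p i) : B x = B.flip x := by
    have hle : ⨆ j, p j ≤ LinearMap.eqLocus (B x) (B.flip x) :=
      iSup_le fun j y hy => hB i j x hx y hy
    exact LinearMap.eqLocus_eq_top.1 (top_le_iff.1 (hp ▸ hle))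
  have hle : ⨆ i, p i ≤ LinearMap.eqLocus B B.flip := iSup_le left_mem
  have hflip : B = B.flip := LinearMap.eqLocus_eq_top.1 (top_le_iff.1 (hp ▸ hle))
  exact ⟨fun x y => LinearMap.congr_fun₂ hflip x y⟩

theorem pos_of_iSup_eq_top [PartialOrder R] [IsOrderedCancelAddMonoid R]
    (hp : ⨆ i, p i = ⊤) (horth : Pairwise fun i j => ∀ x ∈ p i, ∀ y ∈ p j, B x y = 0)
    (hpos : ∀ i, ∀ x ∈ p i, x ≠ 0 → 0 < B x x) {x : M} (hx : x ≠ 0) : 0 < B x x := by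
  have hmem : x ∈ ⨆ i, p i := hp ▸ Submodule.mem_top
  obtain ⟨f, hf, rfl⟩ := (Submodule.mem_iSup_iff_exists_finsupp _ _).1 hmem
  have hdiag : B (f.sum fun _ y => y) (f.sum fun _ y => y) = ∑ i ∈ f.support, B (f i) (f i) := by
    simp only [Finsupp.sum, map_sum, LinearMap.sum_apply]
    refine Finset.sum_congr rfl fun i hi => Finset.sum_eq_single_of_mem i hi fun j _ hji => ?_
    exact horth hji _ (hf j) _ (hf i)
  have hsupp : f.support.Nonempty := by
    rw [Finsupp.support_nonempty_iff]
    rintro rfl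
    exact hx Finsupp.sum_zero_index
  rw [hdiag]
  exact Finset.sum_pos (fun i hi => hpos i _ (hf i) (Finsupp.mem_support_iff.1 hi)) hsupp

end Bilinear

section SkewAdjoint

variable {R M : Type*} [CommRing R] [AddCommGroup M] [Module R M]
  {B : LinearMap.BilinForm R M} {f g : Module.End R M}

theorem apply_pow_of_isSkewAdjoint (hf : B.IsSkewAdjoint f) (n : ℕ) (x y : M) :
    B ((f ^ n) x) y = (-1) ^ n * B x ((f ^ n) y) := by
  induction n generalizing y with
  | zero => simp only [pow_zero, Module.End.one_apply, one_mul]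
  | succ n ih =>
    calc B ((f ^ (n + 1)) x) y
        = -B ((f ^ n) x) (f y) := by
          rw [pow_succ', Module.End.mul_apply, hf, Pi.neg_apply, map_neg]
      _ = (-1) ^ (n + 1) * B x ((f ^ (n + 1)) y) := by
          rw [ih, pow_succ f, Module.End.mul_apply, pow_succ (-1 : R)]; ring

theorem apply_pow_comp_pow_of_isSkewAdjoint (hf : B.IsSkewAdjoint f) (hg : B.IsSkewAdjoint g)
    (hfg : Commute f g) (m n : ℕ) (x y : M) :
    B (((f ^ m) ∘ₗ (g ^ n)) x) y = (-1) ^ (m + n) * B x (((f ^ m) ∘ₗ (g ^ n)) y) := by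
  have hcomm : (f ^ m) ∘ₗ (g ^ n) = (g ^ n) ∘ₗ (f ^ m) := hfg.pow_pow m n
  rw [LinearMap.comp_apply, apply_pow_of_isSkewAdjoint hf, apply_pow_of_isSkewAdjoint hg, hcomm,
    LinearMap.comp_apply, ← mul_assoc, ← pow_add]

end SkewAdjoint

theorem pow_comp_pow_comp {R M : Type*} [Semiring R] [AddCommMonoid M] [Module R M]
    {f g : Module.End R M} (hfg : Commute f g) (m n p q : ℕ) :
    ((f ^ m) ∘ₗ (g ^ n)) ∘ₗ ((f ^ p) ∘ₗ (g ^ q)) = (f ^ (m + p)) ∘ₗ (g ^ (n + q)) := by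
  have h := (hfg.symm.pow_pow n p).mul_mul_mul_comm (f ^ m) (g ^ q)
  rwa [← pow_add, ← pow_add] at h

section Lefschetz

variable {R M : Type*} [Ring R] [AddCommGroup M] [Module R M]
  {V : ℤ → Submodule R M} {N : Module.End R M}

theorem pow_apply_mem_sub_two_mul (hN : ∀ a, ∀ x ∈ V a, N x ∈ V (a - 2)) (n : ℕ) {a : ℤ} {x : M}
    (hx : x ∈ V a) : (N ^ n) x ∈ V (a - 2 * n) := by
  induction n with
  | zero => simpa using hx
  | succ n ih =>
    rw [pow_succ', Module.End.mul_apply]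
    convert hN _ _ ih using 2
    push_cast
    ring

theorem le_primitive_sup_map (hN : ∀ a, ∀ x ∈ V a, N x ∈ V (a - 2))
    (hsurj : ∀ a : ℕ, V (-a) ≤ (V a).map (N ^ a)) (a : ℕ) :
    V a ≤ (V a ⊓ LinearMap.ker (N ^ (a + 1))) ⊔ (V ((a + 2 : ℕ) : ℤ)).map N := by
  intro x hx
  have hNx : (N ^ (a + 1)) x ∈ V (-((a + 2 : ℕ) : ℤ)) := by
    convert pow_apply_mem_sub_two_mul hN (a + 1) hx using 2
    push_cast
    ring
  obtain ⟨z, hz, hzx⟩ := hsurj (a + 2) hNx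
  have hNz : N z ∈ V a := by
    convert hN _ z hz using 2
    push_cast
    ring
  have hker : x - N z ∈ LinearMap.ker (N ^ (a + 1)) := by
    rw [LinearMap.mem_ker, map_sub, sub_eq_zero, ← hzx, pow_succ N (a + 1), Module.End.mul_apply]
  exact Submodule.mem_sup.2
    ⟨x - N z, ⟨sub_mem hx hNz, hker⟩, N z, Submodule.mem_map_of_mem hz, sub_add_cancel x (N z)⟩

theorem le_of_primitive_le {S : Submodule R M} {b : ℕ} (hbdd : ∀ a : ℤ, b < a → V a = ⊥)
    (hN : ∀ a, ∀ x ∈ V a, N x ∈ V (a - 2))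
    (hsurj : ∀ a : ℕ, V (-a) ≤ (V a).map (N ^ a)) (hS : S ∈ N.invtSubmodule)
    (hprim : ∀ a : ℕ, V a ⊓ LinearMap.ker (N ^ (a + 1)) ≤ S) (a : ℤ) : V a ≤ S := by
  have nonneg_le (k : ℕ) : ∀ a : ℕ, b < a + 2 * k → V a ≤ S := by
    induction k with
    | zero => exact fun a ha => (hbdd a (by omega)).trans_le bot_le
    | succ k ih =>
      intro a ha
      refine (le_primitive_sup_map hN hsurj a).trans (sup_le (hprim a) ?_)
      exact (Submodule.map_mono (ih (a + 2) (by omega))).trans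
        ((Module.End.mem_invtSubmodule_iff_map_le N).1 hS)
  obtain ⟨n, rfl | rfl⟩ := a.eq_nat_or_neg
  · exact nonneg_le (b + 1) n (by omega)
  · intro x hx
    obtain ⟨z, hz, rfl⟩ := hsurj n hx
    exact Module.End.pow_apply_mem_of_forall_mem n hS z (nonneg_le (b + 1) n (by omega) hz)

end Lefschetz

/-- The summand `N₁^r N₂^s P_{a,b}` of the primitive decomposition, indexed by `i = (a, b, r, s)`.
It is zero when `r > a` or `s > b`. -/
def primitivePiece {H : Type} [AddCommGroup H] [Module ℝ H] (Hgr : ℤ → ℤ → Submodule ℝ H)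
    (N₁ N₂ : H →ₗ[ℝ] H) (i : ℕ × ℕ × ℕ × ℕ) : Submodule ℝ H :=
  (prim Hgr N₁ N₂ i.1 i.2.1).map ((N₁ ^ i.2.2.1) ∘ₗ (N₂ ^ i.2.2.2))

/-- The scalar `(-1)^r r!/(a-r)!` relating `w (N^r x)` to `N^{a-r} x` for `x` primitive of degree
`a` under a single nilpotent operator. The coefficient of `w` on `N₁^r N₂^s P_{a,b}` is the product
of two such scalars. It is meaningful only for `r ≤ a`. -/
noncomputable def weylCoeff (a r : ℕ) : ℝ :=
  (-1) ^ r * ((r.factorial : ℝ) / ((a - r).factorial : ℝ))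

theorem weylCoeff_mul_weylCoeff_sub {a r : ℕ} (hr : r ≤ a) :
    weylCoeff a r * weylCoeff a (a - r) = (-1) ^ a := by
  have hsign : (-1 : ℝ) ^ r * (-1) ^ (a - r) = (-1) ^ a := by
    rw [← pow_add, Nat.add_sub_cancel' hr]
  rw [← hsign, weylCoeff, weylCoeff, Nat.sub_sub_self hr]
  field_simp

theorem neg_one_pow_mul_weylCoeff_pos (a r : ℕ) : 0 < (-1) ^ r * weylCoeff a r := by
  rw [weylCoeff, ← mul_assoc, ← mul_pow, neg_one_mul, neg_neg, one_pow, one_mul]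
  positivity

variable {H : Type} [AddCommGroup H] [Module ℝ H] {Hgr : ℤ → ℤ → Submodule ℝ H}
  {N₁ N₂ w : H →ₗ[ℝ] H} {ψ : H →ₗ[ℝ] H →ₗ[ℝ] ℝ} {a b a' b' r s m n : ℕ} {x y : H}

namespace IsHL

theorem commute (h : IsHL Hgr N₁ N₂) : Commute N₁ N₂ := h.comm

theorem pow_comp_pow_apply_mem (h : IsHL Hgr N₁ N₂) (m n : ℕ) {a b : ℤ} (hx : x ∈ Hgr a b) :
    ((N₁ ^ m) ∘ₗ (N₂ ^ n)) x ∈ Hgr (a - 2 * m) (b - 2 * n) :=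
  pow_apply_mem_sub_two_mul (V := fun c => Hgr c _) (fun c => h.mapN₁ c _) m
    (pow_apply_mem_sub_two_mul (h.mapN₂ a) n hx)

theorem pow_comp_pow_apply_eq_zero (h : IsHL Hgr N₁ N₂) (hx : x ∈ prim Hgr N₁ N₂ a b)
    (hmn : a < m ∨ b < n) : ((N₁ ^ m) ∘ₗ (N₂ ^ n)) x = 0 := by
  obtain ⟨⟨-, hx₁⟩, hx₂⟩ := hx
  have hcomm : (N₁ ^ m) ∘ₗ (N₂ ^ n) = (N₂ ^ n) ∘ₗ (N₁ ^ m) := h.commute.pow_pow m n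
  obtain hm | hn := hmn
  · rw [hcomm, LinearMap.comp_apply, Module.End.pow_map_zero_of_le hm hx₁, map_zero]
  · rw [LinearMap.comp_apply, Module.End.pow_map_zero_of_le hn hx₂, map_zero]

theorem exists_forall_eq_bot (h : IsHL Hgr N₁ N₂) :
    ∃ B : ℕ, ∀ a b : ℤ, B < a ∨ B < b → Hgr a b = ⊥ := by
  have := h.findim
  have hfin : {p : ℤ × ℤ | Hgr p.1 p.2 ≠ ⊥}.Finite :=
    WellFoundedGT.finite_ne_bot_of_iSupIndep h.internal.submodule_iSupIndep
  refine ⟨hfin.toFinset.sup fun p => p.1.natAbs + p.2.natAbs, fun a b hab => ?_⟩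
  by_contra hne
  have hle := Finset.le_sup (f := fun p : ℤ × ℤ => p.1.natAbs + p.2.natAbs)
    (hfin.mem_toFinset.2 (show (a, b) ∈ {p : ℤ × ℤ | Hgr p.1 p.2 ≠ ⊥} from hne))
  dsimp only at hle
  omega

theorem inf_ker_le_map_pow (h : IsHL Hgr N₁ N₂) (a : ℤ) (b k : ℕ) :
    Hgr a (-b) ⊓ LinearMap.ker (N₁ ^ k) ≤ (Hgr a b ⊓ LinearMap.ker (N₁ ^ k)).map (N₂ ^ b) := by
  rintro y ⟨hy, hky⟩
  obtain ⟨z, hz, rfl⟩ := (h.bijN₂ a b).1.ge hy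
  have hN₁z : (N₁ ^ k) z ∈ Hgr (a - 2 * k) b :=
    pow_apply_mem_sub_two_mul (V := fun c => Hgr c b) (fun c => h.mapN₁ c b) k hz
  have hN₂N₁z : (N₂ ^ b) ((N₁ ^ k) z) = 0 :=
    (LinearMap.congr_fun (h.commute.pow_pow k b).eq z).symm.trans hky
  exact ⟨z, ⟨hz, (h.bijN₂ _ b).2 _ hN₁z hN₂N₁z⟩, rfl⟩

theorem inf_ker_le_of_prim_le (h : IsHL Hgr N₁ N₂) {S : Submodule ℝ H}
    (hS : S ∈ Module.End.invtSubmodule N₂) (hprim : ∀ b, prim Hgr N₁ N₂ a b ≤ S) (b : ℤ) :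
    Hgr a b ⊓ LinearMap.ker (N₁ ^ (a + 1)) ≤ S := by
  obtain ⟨B, hB⟩ := h.exists_forall_eq_bot
  refine le_of_primitive_le (V := fun b => Hgr a b ⊓ LinearMap.ker (N₁ ^ (a + 1))) (b := B)
    (fun b hb => by rw [hB a b (Or.inr hb), bot_inf_eq]) (fun b x hx => ⟨h.mapN₂ _ _ _ hx.1, ?_⟩)
    (fun b => h.inf_ker_le_map_pow a b (a + 1)) hS hprim b
  have hcomm : N₁ ^ (a + 1) * N₂ = N₂ * N₁ ^ (a + 1) := h.commute.pow_left (a + 1)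
  exact (LinearMap.congr_fun hcomm x).trans ((congrArg N₂ hx.2).trans (map_zero N₂))

theorem eq_top_of_prim_le (h : IsHL Hgr N₁ N₂) {S : Submodule ℝ H}
    (hS₁ : S ∈ Module.End.invtSubmodule N₁) (hS₂ : S ∈ Module.End.invtSubmodule N₂)
    (hprim : ∀ a b, prim Hgr N₁ N₂ a b ≤ S) : S = ⊤ := by
  obtain ⟨B, hB⟩ := h.exists_forall_eq_bot
  have hle (a b : ℤ) : Hgr a b ≤ S :=
    le_of_primitive_le (V := fun a => Hgr a b) (fun a ha => hB a b (Or.inl ha))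
      (fun a => h.mapN₁ a b) (fun a => (h.bijN₁ a b).1.ge) hS₁
      (fun a => h.inf_ker_le_of_prim_le hS₂ (hprim a) b) a
  rw [eq_top_iff, ← h.internal.submodule_iSup_eq_top]
  exact iSup_le fun p => hle p.1 p.2

theorem iSup_primitivePiece (h : IsHL Hgr N₁ N₂) : ⨆ i, primitivePiece Hgr N₁ N₂ i = ⊤ := by
  refine h.eq_top_of_prim_le ((Module.End.mem_invtSubmodule N₁).2 (iSup_le ?_))
    ((Module.End.mem_invtSubmodule N₂).2 (iSup_le ?_)) fun a b x hx =>
      Submodule.mem_iSup_of_mem (a, b, 0, 0) ⟨x, hx, rfl⟩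
  · rintro ⟨a, b, r, s⟩ _ ⟨z, hz, rfl⟩
    refine Submodule.mem_iSup_of_mem (a, b, 1 + r, 0 + s) ⟨z, hz, ?_⟩
    rw [← pow_comp_pow_comp h.commute, pow_one, pow_zero]
    rfl
  · rintro ⟨a, b, r, s⟩ _ ⟨z, hz, rfl⟩
    refine Submodule.mem_iSup_of_mem (a, b, 0 + r, 1 + s) ⟨z, hz, ?_⟩
    rw [← pow_comp_pow_comp h.commute, pow_one, pow_zero]
    rfl

end IsHL

namespace IsPolarization

theorem apply_pow_comp_pow (hψ : IsPolarization Hgr N₁ N₂ ψ) (h : IsHL Hgr N₁ N₂)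
    (m n : ℕ) (x y : H) :
    ψ (((N₁ ^ m) ∘ₗ (N₂ ^ n)) x) y = (-1) ^ (m + n) * ψ x (((N₁ ^ m) ∘ₗ (N₂ ^ n)) y) := by
  refine apply_pow_comp_pow_of_isSkewAdjoint (B := ψ) (fun x y => ?_) (fun x y => ?_) h.commute ..
  · rw [Pi.neg_apply, map_neg, eq_neg_of_add_eq_zero_left (hψ.skew₁ x y)]
  · rw [Pi.neg_apply, map_neg, eq_neg_of_add_eq_zero_left (hψ.skew₂ x y)]

theorem eq_of_apply_pow_comp_pow_ne_zero (hψ : IsPolarization Hgr N₁ N₂ ψ) (h : IsHL Hgr N₁ N₂)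
    (hx : x ∈ prim Hgr N₁ N₂ a b) (hy : y ∈ prim Hgr N₁ N₂ a' b')
    (hne : ψ x (((N₁ ^ m) ∘ₗ (N₂ ^ n)) y) ≠ 0) : m = a ∧ m = a' ∧ n = b ∧ n = b' := by
  have hdeg : (a : ℤ) + (a' - 2 * m) = 0 ∧ (b : ℤ) + (b' - 2 * n) = 0 := by
    by_contra hdeg
    exact hne (hψ.orth _ _ _ _ hdeg x hx.1.1 _ (h.pow_comp_pow_apply_mem m n hy.1.1))
  have hright : ¬(a' < m ∨ b' < n) := fun hlt =>
    hne (by rw [h.pow_comp_pow_apply_eq_zero hy hlt, map_zero])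
  have hleft : ¬(a < m ∨ b < n) := fun hlt => by
    have hmove := hψ.apply_pow_comp_pow h m n x y
    rw [h.pow_comp_pow_apply_eq_zero hx hlt, map_zero, LinearMap.zero_apply] at hmove
    exact mul_ne_zero (pow_ne_zero _ (neg_ne_zero.2 one_ne_zero)) hne hmove.symm
  omega

end IsPolarization

namespace IsW

theorem apply_of_le (hw : IsW Hgr N₁ N₂ w) (hr : r ≤ a) (hs : s ≤ b)
    (hx : x ∈ prim Hgr N₁ N₂ a b) :
    w (((N₁ ^ r) ∘ₗ (N₂ ^ s)) x) =
      (weylCoeff a r * weylCoeff b s) • ((N₁ ^ (a - r)) ∘ₗ (N₂ ^ (b - s))) x := by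
  rw [hw a b r s x hx, if_pos ⟨hr, hs⟩, weylCoeff, weylCoeff, pow_add]
  congr 1
  ring

theorem apply_apply (hw : IsW Hgr N₁ N₂ w) (h : IsHL Hgr N₁ N₂) (r s : ℕ)
    (hx : x ∈ prim Hgr N₁ N₂ a b) :
    w (w (((N₁ ^ r) ∘ₗ (N₂ ^ s)) x)) = (-1 : ℝ) ^ (a + b) • ((N₁ ^ r) ∘ₗ (N₂ ^ s)) x := by
  by_cases hrs : r ≤ a ∧ s ≤ b
  · obtain ⟨hr, hs⟩ := hrs
    rw [hw.apply_of_le hr hs hx, map_smul,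
      hw.apply_of_le (Nat.sub_le a r) (Nat.sub_le b s) hx, smul_smul, mul_mul_mul_comm,
      weylCoeff_mul_weylCoeff_sub hr, weylCoeff_mul_weylCoeff_sub hs, ← pow_add,
      Nat.sub_sub_self hr, Nat.sub_sub_self hs]
  · rw [h.pow_comp_pow_apply_eq_zero hx (by omega), map_zero, map_zero, smul_zero]

theorem apply_neg_one_pow_smul_apply (hw : IsW Hgr N₁ N₂ w) (h : IsHL Hgr N₁ N₂) (r s : ℕ)
    (hx : x ∈ prim Hgr N₁ N₂ a b) :
    w ((-1 : ℝ) ^ (a + b) • w (((N₁ ^ r) ∘ₗ (N₂ ^ s)) x)) = ((N₁ ^ r) ∘ₗ (N₂ ^ s)) x := by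
  rw [map_smul, hw.apply_apply h r s hx, smul_smul, ← mul_pow, neg_one_mul, neg_neg, one_pow,
    one_smul]

theorem pow_four_eq_one (hw : IsW Hgr N₁ N₂ w) (h : IsHL Hgr N₁ N₂) : w ^ 4 = 1 := by
  suffices hle : ⨆ i, primitivePiece Hgr N₁ N₂ i ≤ LinearMap.eqLocus (w ^ 4) 1 from
    LinearMap.eqLocus_eq_top.1 (top_le_iff.1 (h.iSup_primitivePiece ▸ hle))
  refine iSup_le ?_
  rintro ⟨a, b, r, s⟩ _ ⟨x, hx, rfl⟩
  change w (w (w (w (((N₁ ^ r) ∘ₗ (N₂ ^ s)) x)))) = ((N₁ ^ r) ∘ₗ (N₂ ^ s)) x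
  rw [hw.apply_apply h r s hx, map_smul, hw.apply_neg_one_pow_smul_apply h r s hx]

theorem bijective (hw : IsW Hgr N₁ N₂ w) (h : IsHL Hgr N₁ N₂) : Function.Bijective w :=
  (Module.End.isUnit_iff w).1 (IsUnit.of_pow_eq_one (hw.pow_four_eq_one h) four_ne_zero)

end IsW

namespace IsPolarization

theorem apply_w_eq_zero (hψ : IsPolarization Hgr N₁ N₂ ψ) (h : IsHL Hgr N₁ N₂)
    (hw : IsW Hgr N₁ N₂ w) (r s r' s' : ℕ) (hx : x ∈ prim Hgr N₁ N₂ a b)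
    (hy : y ∈ prim Hgr N₁ N₂ a' b') (hne : ¬(r = r' ∧ s = s' ∧ a = a' ∧ b = b')) :
    ψ (((N₁ ^ r) ∘ₗ (N₂ ^ s)) x) (w (((N₁ ^ r') ∘ₗ (N₂ ^ s')) y)) = 0 := by
  by_cases hrs : r' ≤ a' ∧ s' ≤ b'
  · have hzero : ψ x (((N₁ ^ (r + (a' - r'))) ∘ₗ (N₂ ^ (s + (b' - s')))) y) = 0 := by
      by_contra hpair
      have := hψ.eq_of_apply_pow_comp_pow_ne_zero h hx hy hpair
      omega
    rw [hw.apply_of_le hrs.1 hrs.2 hy, map_smul, hψ.apply_pow_comp_pow h,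
      ← LinearMap.comp_apply (_ ∘ₗ _), pow_comp_pow_comp h.commute, hzero, mul_zero, smul_zero]
  · rw [h.pow_comp_pow_apply_eq_zero hy (by omega), map_zero, map_zero]

theorem apply_w_of_le (hψ : IsPolarization Hgr N₁ N₂ ψ) (h : IsHL Hgr N₁ N₂)
    (hw : IsW Hgr N₁ N₂ w) (hr : r ≤ a) (hs : s ≤ b) (x : H) (hy : y ∈ prim Hgr N₁ N₂ a b) :
    ψ (((N₁ ^ r) ∘ₗ (N₂ ^ s)) x) (w (((N₁ ^ r) ∘ₗ (N₂ ^ s)) y)) =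
      ((-1) ^ r * weylCoeff a r) * ((-1) ^ s * weylCoeff b s) *
        ψ x (((N₁ ^ a) ∘ₗ (N₂ ^ b)) y) := by
  rw [hw.apply_of_le hr hs hy, map_smul, hψ.apply_pow_comp_pow h, ← LinearMap.comp_apply (_ ∘ₗ _),
    pow_comp_pow_comp h.commute, Nat.add_sub_cancel' hr, Nat.add_sub_cancel' hs,
    pow_add, smul_eq_mul]
  ring

theorem isSymm_compl₂_w (hψ : IsPolarization Hgr N₁ N₂ ψ) (h : IsHL Hgr N₁ N₂)
    (hw : IsW Hgr N₁ N₂ w) : LinearMap.BilinForm.IsSymm (ψ.compl₂ w) := by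
  refine isSymm_of_iSup_eq_top h.iSup_primitivePiece ?_
  rintro ⟨a, b, r, s⟩ ⟨a', b', r', s'⟩ _ ⟨x, hx, rfl⟩ _ ⟨y, hy, rfl⟩
  change ψ (((N₁ ^ r) ∘ₗ (N₂ ^ s)) x) (w (((N₁ ^ r') ∘ₗ (N₂ ^ s')) y)) =
    ψ (((N₁ ^ r') ∘ₗ (N₂ ^ s')) y) (w (((N₁ ^ r) ∘ₗ (N₂ ^ s)) x))
  by_cases heq : r = r' ∧ s = s' ∧ a = a' ∧ b = b'
  · obtain ⟨rfl, rfl, rfl, rfl⟩ := heq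
    by_cases hrs : r ≤ a ∧ s ≤ b
    · rw [hψ.apply_w_of_le h hw hrs.1 hrs.2 x hy, hψ.apply_w_of_le h hw hrs.1 hrs.2 y hx,
        hψ.primSymm a b x hx y hy]
    · have hlt : a < r ∨ b < s := by omega
      simp only [h.pow_comp_pow_apply_eq_zero hx hlt, h.pow_comp_pow_apply_eq_zero hy hlt,
        map_zero]
  · rw [hψ.apply_w_eq_zero h hw r s r' s' hx hy heq,
      hψ.apply_w_eq_zero h hw r' s' r s hy hx (by tauto)]

theorem apply_w_pos_of_mem_primitivePiece (hψ : IsPolarization Hgr N₁ N₂ ψ) (h : IsHL Hgr N₁ N₂)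
    (hw : IsW Hgr N₁ N₂ w) (i : ℕ × ℕ × ℕ × ℕ) (hx : x ∈ primitivePiece Hgr N₁ N₂ i)
    (hne : x ≠ 0) : 0 < ψ x (w x) := by
  obtain ⟨a, b, r, s⟩ := i
  obtain ⟨u, hu, rfl⟩ := hx
  have hrs : r ≤ a ∧ s ≤ b := by
    by_contra hrs
    have hlt : a < r ∨ b < s := by omega
    exact hne (h.pow_comp_pow_apply_eq_zero hu hlt)
  have hu_ne : u ≠ 0 := fun hu0 => hne (by rw [hu0, map_zero])
  rw [hψ.apply_w_of_le h hw hrs.1 hrs.2 u hu]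
  exact mul_pos (mul_pos (neg_one_pow_mul_weylCoeff_pos a r) (neg_one_pow_mul_weylCoeff_pos b s))
    (hψ.primPosDef a b u hu hu_ne)

theorem apply_w_pos (hψ : IsPolarization Hgr N₁ N₂ ψ) (h : IsHL Hgr N₁ N₂)
    (hw : IsW Hgr N₁ N₂ w) (hx : x ≠ 0) : 0 < ψ x (w x) := by
  refine pos_of_iSup_eq_top (B := ψ.compl₂ w) h.iSup_primitivePiece ?_
    (fun i _ hy => hψ.apply_w_pos_of_mem_primitivePiece h hw i hy) hx
  rintro ⟨a, b, r, s⟩ ⟨a', b', r', s'⟩ hij _ ⟨x, hx, rfl⟩ _ ⟨y, hy, rfl⟩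
  refine hψ.apply_w_eq_zero h hw r s r' s' hx hy ?_
  rintro ⟨rfl, rfl, rfl, rfl⟩
  exact hij rfl

end IsPolarization

end HLS

open HLS in
/-- let `(H, N₁, N₂, ψ)` be a polarized bigraded Hodge–Lefschetz structure,
and let `w` be the operator defined by
`w(N₁^r N₂^s x) = (-1)^{r+s} (r!/(a-r)!)(s!/(b-s)!) N₁^{a-r} N₂^{b-s} x` on primitive
elements.  Then (i) `w` is invertible with `w⁻¹(N₁^r N₂^s x) = (-1)^{a+b} w(N₁^r N₂^s x)` for
`x ∈ P_{a,b}`; (ii) `φ(x,y) = ψ(x, w y)` is symmetric and positive definite; and (iii) the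
primitive decomposition is orthogonal for `φ`. -/
theorem statement13
    {H : Type} [AddCommGroup H] [Module ℝ H]
    (Hgr : ℤ → ℤ → Submodule ℝ H) (N₁ N₂ : H →ₗ[ℝ] H)
    (hHL : IsHL Hgr N₁ N₂)
    (ψ : H →ₗ[ℝ] H →ₗ[ℝ] ℝ) (hψ : IsPolarization Hgr N₁ N₂ ψ)
    (w : H →ₗ[ℝ] H) (hw : IsW Hgr N₁ N₂ w) :
    -- (i) `w` is invertible, and `w⁻¹ = (-1)^{a+b} w` on `N₁^r N₂^s (P_{a,b})`
    (Function.Bijective w ∧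
      ∀ a b r s : ℕ, ∀ x ∈ prim Hgr N₁ N₂ a b,
        w (((-1 : ℝ) ^ (a + b)) • w (((N₁ ^ r) ∘ₗ (N₂ ^ s)) x)) =
          ((N₁ ^ r) ∘ₗ (N₂ ^ s)) x) ∧
    -- (ii) `φ = ψ(·, w ·)` is symmetric and positive definite
    ((∀ x y : H, ψ x (w y) = ψ y (w x)) ∧ (∀ x : H, x ≠ 0 → 0 < ψ x (w x))) ∧
    -- (iii) the primitive decomposition is orthogonal for `φ`
    (∀ a b r s a' b' r' s' : ℕ, ∀ x ∈ prim Hgr N₁ N₂ a b, ∀ y ∈ prim Hgr N₁ N₂ a' b',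
      ¬ (r = r' ∧ s = s' ∧ a = a' ∧ b = b') →
      ψ (((N₁ ^ r) ∘ₗ (N₂ ^ s)) x) (w (((N₁ ^ r') ∘ₗ (N₂ ^ s')) y)) = 0) := by
  refine ⟨⟨hw.bijective hHL, ?_⟩, ⟨?_, ?_⟩, ?_⟩
  · exact fun a b r s x hx => hw.apply_neg_one_pow_smul_apply hHL r s hx
  · exact (hψ.isSymm_compl₂_w hHL hw).eq
  · exact fun x hx => hψ.apply_w_pos hHL hw hx
  · exact fun a b r s a' b' r' s' x hx y hy hne => hψ.apply_w_eq_zero hHL hw r s r' s' hx hy hne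
end
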